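/- arXiv:2212.05523 — 5 statements merged into one kernel-verified Lean document; each statement's English description precedes it below -/
import Mathlib

section
/- Let c, C_v, a, σ₀ > 0 be constants, x_L < x_R real numbers, t_f > 0, and let Q = (0,t_f) × (x_L,x_R) × (−1,1) and Q' = (0,t_f) × (x_L,x_R). Let σ : [0,t_f] × [x_L,x_R] → ℝ be continuous, and let g : [0,t_f] × [x_L,x_R] × [−1,1] → ℝ, ρ, T : [0,t_f] × [x_L,x_R] → ℝ be continuously differentiable (fixed, independent of ε). For ε > 0 define the governing-equation loss L_g^ε = ‖(ε²/c)∂_t g + ε μ ∂_x g − ε⟨μ ∂_x g⟩ + √σ₀ μ ∂_x ρ + σ g‖²_{L²(Q)} + ‖(1/c)∂_t ρ + (1/√σ₀)⟨μ ∂_x g⟩ + (1/2)C_v ∂_t T‖²_{L²(Q')} + ‖ε² C_v ∂_t T − σ(2ρ − acT⁴)‖²_{L²(Q')}. Then lim_{ε → 0⁺} L_g^ε = ‖√σ₀ μ ∂_x ρ + σ g‖²_{L²(Q)} + ‖(1/c)∂_t ρ + (1/√σ₀)⟨μ ∂_x g⟩ + (1/2)C_v ∂_t T‖²_{L²(Q')}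 + ‖σ(2ρ − acT⁴)‖²_{L²(Q')}. -/
open MeasureTheory

/-- The angular average `⟨h⟩ = (1/2) ∫_{−1}^{1} h(μ) dμ`. -/
noncomputable def avg (h : ℝ → ℝ) : ℝ := (1 / 2) * ∫ μ in (-1 : ℝ)..1, h μ

/-!
Tietze's theorem extends the coefficient, the fields and the derivatives of the fields relative to
the closed box to continuous functions on the whole space; on the open box the relative derivatives
are the ordinary ones. The boundary is null, so each residual may be replaced under the integral by
a function jointly continuous in `ε` and the phase-space variables. Integration over a compact
interval preserves joint continuity in the remaining variables, so the loss is continuous in `ε` on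
all of `ℝ`, and at `ε = 0` it is the loss of the limit system.
-/

open Set

universe u v

/-- `f` agrees on `s` with a function that is continuous on the whole space. For `s` open and
bounded this is stronger than `ContinuousOn f s`: it also controls `f` near the boundary of `s`. The
values of `f` off `s` are irrelevant, so `f` may be a `deriv` that takes junk values there. -/
def ContinuouslyExtendableOn {X : Type u} {Y : Type v} [TopologicalSpace X] [TopologicalSpace Y]
    (f : X → Y) (s : Set X) : Prop :=
  ∃ F : X → Y, Continuous F ∧ EqOn f F s

namespace ContinuouslyExtendableOn

section Topology

variable {X : Type u} {Y : Type v} {Z : Type*} [TopologicalSpace X] [TopologicalSpace Y]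
  [TopologicalSpace Z] {f g : X → Y} {s t : Set X}

theorem of_continuousOn_of_isClosed [NormalSpace X] [TietzeExtension.{u, v} Y]
    (hf : ContinuousOn f s) (hs : IsClosed s) : ContinuouslyExtendableOn f s := by
  obtain ⟨F, hF⟩ := ContinuousMap.exists_restrict_eq hs ⟨s.domRestrict f, hf.domRestrict⟩
  exact ⟨F, F.continuous, fun x hx => (DFunLike.congr_fun hF ⟨x, hx⟩).symm⟩

theorem continuous_of_univ (hf : ContinuouslyExtendableOn f univ) : Continuous f := by
  obtain ⟨F, hF, hfF⟩ := hf
  rwa [(eqOn_univ f F).mp hfF]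

theorem mono (hf : ContinuouslyExtendableOn f s) (hts : t ⊆ s) : ContinuouslyExtendableOn f t :=
  hf.imp fun _ hF => ⟨hF.1, hF.2.mono hts⟩

theorem congr (hf : ContinuouslyExtendableOn f s) (hgf : EqOn g f s) :
    ContinuouslyExtendableOn g s :=
  hf.imp fun _ hF => ⟨hF.1, hgf.trans hF.2⟩

theorem comp_continuous {φ : Z → X} {r : Set Z} (hf : ContinuouslyExtendableOn f s)
    (hφ : Continuous φ) (hrs : MapsTo φ r s) : ContinuouslyExtendableOn (fun z => f (φ z)) r := by
  obtain ⟨F, hF, hfF⟩ := hf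
  exact ⟨F ∘ φ, hF.comp hφ, fun z hz => hfF (hrs hz)⟩

theorem add [Add Y] [ContinuousAdd Y] (hf : ContinuouslyExtendableOn f s)
    (hg : ContinuouslyExtendableOn g s) : ContinuouslyExtendableOn (fun x => f x + g x) s := by
  obtain ⟨F, hF, hfF⟩ := hf
  obtain ⟨G, hG, hgG⟩ := hg
  exact ⟨fun x => F x + G x, hF.add hG, fun x hx => congrArg₂ (· + ·) (hfF hx) (hgG hx)⟩

theorem sub [Sub Y] [ContinuousSub Y] (hf : ContinuouslyExtendableOn f s)
    (hg : ContinuouslyExtendableOn g s) : ContinuouslyExtendableOn (fun x => f x - g x) s := by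
  obtain ⟨F, hF, hfF⟩ := hf
  obtain ⟨G, hG, hgG⟩ := hg
  exact ⟨fun x => F x - G x, hF.sub hG, fun x hx => congrArg₂ (· - ·) (hfF hx) (hgG hx)⟩

theorem mul [Mul Y] [ContinuousMul Y] (hf : ContinuouslyExtendableOn f s)
    (hg : ContinuouslyExtendableOn g s) : ContinuouslyExtendableOn (fun x => f x * g x) s := by
  obtain ⟨F, hF, hfF⟩ := hf
  obtain ⟨G, hG, hgG⟩ := hg
  exact ⟨fun x => F x * G x, hF.mul hG, fun x hx => congrArg₂ (· * ·) (hfF hx) (hgG hx)⟩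

theorem continuous_mul [Mul Y] [ContinuousMul Y] (hg : ContinuouslyExtendableOn g s)
    (hf : Continuous f) : ContinuouslyExtendableOn (fun x => f x * g x) s :=
  mul ⟨f, hf, eqOn_refl f s⟩ hg

theorem pow [Monoid Y] [ContinuousMul Y] (hf : ContinuouslyExtendableOn f s) (n : ℕ) :
    ContinuouslyExtendableOn (fun x => f x ^ n) s := by
  obtain ⟨F, hF, hfF⟩ := hf
  exact ⟨fun x => F x ^ n, hF.pow n, fun x hx => congrArg (· ^ n) (hfF hx)⟩

end Topology

section Integral

variable {X : Type*} [TopologicalSpace X] {s : Set X}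

theorem intervalIntegral {E : Type*} [NormedAddCommGroup E] [NormedSpace ℝ E] {f : X → ℝ → E}
    {a b : ℝ} (hab : a ≤ b)
    (hf : ContinuouslyExtendableOn (fun p : X × ℝ => f p.1 p.2) (s ×ˢ Ioo a b)) :
    ContinuouslyExtendableOn (fun x => ∫ t in a..b, f x t) s := by
  obtain ⟨F, hF, hfF⟩ := hf
  have hF' : Continuous (Function.uncurry fun x t => F (x, t)) := hF
  refine ⟨fun x => ∫ t in a..b, F (x, t),
    intervalIntegral.continuous_parametric_intervalIntegral_of_continuous' hF' a b, fun x hx => ?_⟩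
  exact intervalIntegral.integral_congr_Ioo_of_le hab fun t ht => hfF (mk_mem_prod hx ht)

theorem avg {f : X → ℝ → ℝ}
    (hf : ContinuouslyExtendableOn (fun p : X × ℝ => f p.1 p.2) (s ×ˢ Ioo (-1) 1)) :
    ContinuouslyExtendableOn (fun x => avg (f x)) s :=
  (intervalIntegral (by norm_num) hf).continuous_mul continuous_const

end Integral

end ContinuouslyExtendableOn

theorem deriv_comp_add_smul_eq_lineDeriv {𝕜 E F : Type*} [NontriviallyNormedField 𝕜]
    [AddCommGroup E] [Module 𝕜 E] [NormedAddCommGroup F] [NormedSpace 𝕜 F]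
    (f : E → F) (p v : E) (t : 𝕜) :
    deriv (fun s => f (p + s • v)) t = lineDeriv 𝕜 f (p + t • v) v := by
  simpa only [lineDeriv, add_smul, add_assoc, add_zero] using
    (deriv_comp_const_add (fun s => f (p + s • v)) t 0).symm

namespace ContinuouslyExtendableOn

section Deriv

variable {E E' : Type u} {F : Type v} [NormedAddCommGroup E] [NormedSpace ℝ E]
  [NormedAddCommGroup E'] [NormedSpace ℝ E'] [NormedAddCommGroup F] [NormedSpace ℝ F]
  [TietzeExtension.{u, v} F]

theorem lineDeriv_of_contDiffOn {f : E → F} {K : Set E} (hf : ContDiffOn ℝ 1 f K)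
    (hK : IsClosed K) (hKu : UniqueDiffOn ℝ K) (v : E) :
    ContinuouslyExtendableOn (fun p => lineDeriv ℝ f p v) (interior K) := by
  have hcont : ContinuousOn (fun p => fderivWithin ℝ f K p v) K :=
    (hf.continuousOn_fderivWithin hKu le_rfl).clm_apply continuousOn_const
  refine ((of_continuousOn_of_isClosed hcont hK).mono interior_subset).congr fun p hp => ?_
  have hKp : K ∈ nhds p := mem_interior_iff_mem_nhds.mp hp
  have hdiff : DifferentiableAt ℝ f p := (hf.contDiffAt hKp).differentiableAt one_ne_zero
  simp only [hdiff.lineDeriv_eq_fderiv, fderivWithin_of_mem_nhds hKp]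

theorem deriv_fst_of_contDiffOn {f : ℝ × E → F} {K : Set (ℝ × E)} (hf : ContDiffOn ℝ 1 f K)
    (hK : IsClosed K) (hKu : UniqueDiffOn ℝ K) :
    ContinuouslyExtendableOn (fun p => deriv (fun s => f (s, p.2)) p.1) (interior K) := by
  refine (lineDeriv_of_contDiffOn hf hK hKu (1, 0)).congr fun p _ => ?_
  simpa using deriv_comp_add_smul_eq_lineDeriv f (0, p.2) (1, 0) p.1

theorem deriv_snd_of_contDiffOn {f : E × ℝ → F} {K : Set (E × ℝ)} (hf : ContDiffOn ℝ 1 f K)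
    (hK : IsClosed K) (hKu : UniqueDiffOn ℝ K) :
    ContinuouslyExtendableOn (fun p => deriv (fun s => f (p.1, s)) p.2) (interior K) := by
  refine (lineDeriv_of_contDiffOn hf hK hKu (0, 1)).congr fun p _ => ?_
  simpa using deriv_comp_add_smul_eq_lineDeriv f (p.1, 0) (0, 1) p.2

theorem deriv_snd_fst_of_contDiffOn {f : E × ℝ × E' → F} {K : Set (E × ℝ × E')}
    (hf : ContDiffOn ℝ 1 f K) (hK : IsClosed K) (hKu : UniqueDiffOn ℝ K) :
    ContinuouslyExtendableOn (fun p => deriv (fun s => f (p.1, s, p.2.2)) p.2.1) (interior K) := by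
  refine (lineDeriv_of_contDiffOn hf hK hKu (0, 1, 0)).congr fun p _ => ?_
  simpa using deriv_comp_add_smul_eq_lineDeriv f (p.1, 0, p.2.2) (0, 1, 0) p.2.1

end Deriv

end ContinuouslyExtendableOn

/-- The residual of the microscopic equation, which governs the angular fluctuation `g`. The
Knudsen number `ε` is any real number, so that the limit equation is the case `ε = 0`. -/
noncomputable def microResidual (c σ₀ : ℝ) (σ : ℝ → ℝ → ℝ) (g : ℝ → ℝ → ℝ → ℝ) (ρ : ℝ → ℝ → ℝ)
    (ε t x μ : ℝ) : ℝ :=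
  (ε ^ 2 / c) * deriv (fun s => g s x μ) t + ε * μ * deriv (fun y => g t y μ) x
    - ε * avg (fun μ' => μ' * deriv (fun y => g t y μ') x)
    + Real.sqrt σ₀ * μ * deriv (fun y => ρ t y) x + σ t x * g t x μ

/-- The residual of the equation for the material temperature `T`, for any real `ε`. -/
noncomputable def temperatureResidual (a c Cv : ℝ) (σ ρ T : ℝ → ℝ → ℝ) (ε t x : ℝ) : ℝ :=
  ε ^ 2 * Cv * deriv (fun s => T s x) t - σ t x * (2 * ρ t x - a * c * (T t x) ^ 4)

/-- The squared `L²` norm of `microResidual`, as an iterated integral over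
`(0, tf) × (xL, xR) × (-1, 1)`. -/
noncomputable def microLoss (c σ₀ xL xR tf : ℝ) (σ : ℝ → ℝ → ℝ) (g : ℝ → ℝ → ℝ → ℝ)
    (ρ : ℝ → ℝ → ℝ) (ε : ℝ) : ℝ :=
  ∫ t in (0 : ℝ)..tf, ∫ x in xL..xR, ∫ μ in (-1 : ℝ)..1, microResidual c σ₀ σ g ρ ε t x μ ^ 2

/-- The squared `L²` norm of `temperatureResidual`, as an iterated integral over
`(0, tf) × (xL, xR)`. -/
noncomputable def temperatureLoss (a c Cv xL xR tf : ℝ) (σ ρ T : ℝ → ℝ → ℝ) (ε : ℝ) : ℝ :=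
  ∫ t in (0 : ℝ)..tf, ∫ x in xL..xR, temperatureResidual a c Cv σ ρ T ε t x ^ 2

section Losses

variable {a c Cv σ₀ xL xR tf : ℝ} {σ ρ T : ℝ → ℝ → ℝ} {g : ℝ → ℝ → ℝ → ℝ} {I J : Set ℝ}

theorem microLoss_zero :
    microLoss c σ₀ xL xR tf σ g ρ 0 = ∫ t in (0 : ℝ)..tf, ∫ x in xL..xR, ∫ μ in (-1 : ℝ)..1,
      (Real.sqrt σ₀ * μ * deriv (fun y => ρ t y) x + σ t x * g t x μ) ^ 2 := by
  simp [microLoss, microResidual]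

theorem temperatureLoss_zero :
    temperatureLoss a c Cv xL xR tf σ ρ T 0 = ∫ t in (0 : ℝ)..tf, ∫ x in xL..xR,
      (σ t x * (2 * ρ t x - a * c * (T t x) ^ 4)) ^ 2 := by
  simp [temperatureLoss, temperatureResidual]

-- The variables are nested as `(((ε, t), x), μ)` so that integrating out the last one three times
-- leaves a function of `ε`.
theorem continuouslyExtendableOn_microResidual
    (hσ : ContinuouslyExtendableOn (fun p : ℝ × ℝ => σ p.1 p.2) (I ×ˢ J))
    (hg : ContinuouslyExtendableOn (fun p : ℝ × ℝ × ℝ => g p.1 p.2.1 p.2.2)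
      (I ×ˢ J ×ˢ Ioo (-1) 1))
    (hgt : ContinuouslyExtendableOn
      (fun p : ℝ × ℝ × ℝ => deriv (fun s => g s p.2.1 p.2.2) p.1) (I ×ˢ J ×ˢ Ioo (-1) 1))
    (hgx : ContinuouslyExtendableOn
      (fun p : ℝ × ℝ × ℝ => deriv (fun y => g p.1 y p.2.2) p.2.1) (I ×ˢ J ×ˢ Ioo (-1) 1))
    (hρx : ContinuouslyExtendableOn (fun p : ℝ × ℝ => deriv (fun y => ρ p.1 y) p.2) (I ×ˢ J)) :
    ContinuouslyExtendableOn
      (fun p : ((ℝ × ℝ) × ℝ) × ℝ => microResidual c σ₀ σ g ρ p.1.1.1 p.1.1.2 p.1.2 p.2)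
      (((univ ×ˢ I) ×ˢ J) ×ˢ Ioo (-1) 1) := by
  have hflux : ContinuouslyExtendableOn
      (fun p : ℝ × ℝ => avg (fun μ' => μ' * deriv (fun y => g p.1 y μ') p.2)) (I ×ˢ J) := by
    have hgx' := hgx.comp_continuous (r := (I ×ˢ J) ×ˢ Ioo (-1) 1)
      (φ := fun q : (ℝ × ℝ) × ℝ => (q.1.1, q.1.2, q.2)) (by fun_prop)
      fun _ hq => ⟨hq.1.1, hq.1.2, hq.2⟩
    exact (hgx'.continuous_mul continuous_snd).avg
  let toTX (p : ((ℝ × ℝ) × ℝ) × ℝ) : ℝ × ℝ := (p.1.1.2, p.1.2)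
  let toTXμ (p : ((ℝ × ℝ) × ℝ) × ℝ) : ℝ × ℝ × ℝ := (p.1.1.2, p.1.2, p.2)
  have toTX_cont : Continuous toTX := by fun_prop
  have toTXμ_cont : Continuous toTXμ := by fun_prop
  have toTX_mapsTo : MapsTo toTX (((univ ×ˢ I) ×ˢ J) ×ˢ Ioo (-1) 1) (I ×ˢ J) :=
    fun _ hp => ⟨hp.1.1.2, hp.1.2⟩
  have toTXμ_mapsTo :
      MapsTo toTXμ (((univ ×ˢ I) ×ˢ J) ×ˢ Ioo (-1) 1) (I ×ˢ J ×ˢ Ioo (-1) 1) :=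
    fun _ hp => ⟨hp.1.1.2, hp.1.2, hp.2⟩
  refine ((((?_ : ContinuouslyExtendableOn _ _).add ?_).sub ?_).add ?_).add ?_
  · exact (hgt.comp_continuous toTXμ_cont toTXμ_mapsTo).continuous_mul (by fun_prop)
  · exact (hgx.comp_continuous toTXμ_cont toTXμ_mapsTo).continuous_mul (by fun_prop)
  · exact (hflux.comp_continuous toTX_cont toTX_mapsTo).continuous_mul (by fun_prop)
  · exact (hρx.comp_continuous toTX_cont toTX_mapsTo).continuous_mul (by fun_prop)
  · exact (hσ.comp_continuous toTX_cont toTX_mapsTo).mul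
      (hg.comp_continuous toTXμ_cont toTXμ_mapsTo)

theorem continuouslyExtendableOn_temperatureResidual
    (hσ : ContinuouslyExtendableOn (fun p : ℝ × ℝ => σ p.1 p.2) (I ×ˢ J))
    (hρ : ContinuouslyExtendableOn (fun p : ℝ × ℝ => ρ p.1 p.2) (I ×ˢ J))
    (hT : ContinuouslyExtendableOn (fun p : ℝ × ℝ => T p.1 p.2) (I ×ˢ J))
    (hTt : ContinuouslyExtendableOn (fun p : ℝ × ℝ => deriv (fun s => T s p.2) p.1) (I ×ˢ J)) :
    ContinuouslyExtendableOn
      (fun p : (ℝ × ℝ) × ℝ => temperatureResidual a c Cv σ ρ T p.1.1 p.1.2 p.2)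
      ((univ ×ˢ I) ×ˢ J) := by
  have hexchange : ContinuouslyExtendableOn
      (fun p : ℝ × ℝ => σ p.1 p.2 * (2 * ρ p.1 p.2 - a * c * T p.1 p.2 ^ 4)) (I ×ˢ J) :=
    hσ.mul ((hρ.continuous_mul continuous_const).sub
      ((hT.pow 4).continuous_mul continuous_const))
  let toTX (p : (ℝ × ℝ) × ℝ) : ℝ × ℝ := (p.1.2, p.2)
  have toTX_cont : Continuous toTX := by fun_prop
  have toTX_mapsTo : MapsTo toTX ((univ ×ˢ I) ×ˢ J) (I ×ˢ J) := fun _ hp => ⟨hp.1.2, hp.2⟩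
  exact ((hTt.comp_continuous toTX_cont toTX_mapsTo).continuous_mul (by fun_prop)).sub
    (hexchange.comp_continuous toTX_cont toTX_mapsTo)

theorem continuous_microLoss (hx : xL < xR) (htf : 0 < tf)
    (hσ : ContinuousOn (fun p : ℝ × ℝ => σ p.1 p.2) (Icc 0 tf ×ˢ Icc xL xR))
    (hg : ContDiffOn ℝ 1 (fun p : ℝ × ℝ × ℝ => g p.1 p.2.1 p.2.2)
      (Icc 0 tf ×ˢ (Icc xL xR ×ˢ Icc (-1) 1)))
    (hρ : ContDiffOn ℝ 1 (fun p : ℝ × ℝ => ρ p.1 p.2) (Icc 0 tf ×ˢ Icc xL xR)) :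
    Continuous (microLoss c σ₀ xL xR tf σ g ρ) := by
  have hK : IsClosed (Icc 0 tf ×ˢ Icc xL xR) := isClosed_Icc.prod isClosed_Icc
  have hKu : UniqueDiffOn ℝ (Icc 0 tf ×ˢ Icc xL xR) :=
    (uniqueDiffOn_Icc htf).prod (uniqueDiffOn_Icc hx)
  have hL : IsClosed (Icc 0 tf ×ˢ (Icc xL xR ×ˢ Icc (-1 : ℝ) 1)) :=
    isClosed_Icc.prod (isClosed_Icc.prod isClosed_Icc)
  have hLu : UniqueDiffOn ℝ (Icc 0 tf ×ˢ (Icc xL xR ×ˢ Icc (-1 : ℝ) 1)) :=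
    (uniqueDiffOn_Icc htf).prod ((uniqueDiffOn_Icc hx).prod (uniqueDiffOn_Icc (by norm_num)))
  have hσ' := (ContinuouslyExtendableOn.of_continuousOn_of_isClosed hσ hK).mono interior_subset
  have hg' := (ContinuouslyExtendableOn.of_continuousOn_of_isClosed hg.continuousOn hL).mono
    interior_subset
  have hgt := ContinuouslyExtendableOn.deriv_fst_of_contDiffOn hg hL hLu
  have hgx := ContinuouslyExtendableOn.deriv_snd_fst_of_contDiffOn hg hL hLu
  have hρx := ContinuouslyExtendableOn.deriv_snd_of_contDiffOn hρ hK hKu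
  simp only [interior_prod_eq, interior_Icc] at hσ' hg' hgt hgx hρx
  have hres := continuouslyExtendableOn_microResidual (c := c) (σ₀ := σ₀) hσ' hg' hgt hgx hρx
  exact ((((hres.pow 2).intervalIntegral (by norm_num)).intervalIntegral hx.le).intervalIntegral
    htf.le).continuous_of_univ

theorem continuous_temperatureLoss (hx : xL < xR) (htf : 0 < tf)
    (hσ : ContinuousOn (fun p : ℝ × ℝ => σ p.1 p.2) (Icc 0 tf ×ˢ Icc xL xR))
    (hρ : ContinuousOn (fun p : ℝ × ℝ => ρ p.1 p.2) (Icc 0 tf ×ˢ Icc xL xR))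
    (hT : ContDiffOn ℝ 1 (fun p : ℝ × ℝ => T p.1 p.2) (Icc 0 tf ×ˢ Icc xL xR)) :
    Continuous (temperatureLoss a c Cv xL xR tf σ ρ T) := by
  have hK : IsClosed (Icc 0 tf ×ˢ Icc xL xR) := isClosed_Icc.prod isClosed_Icc
  have hKu : UniqueDiffOn ℝ (Icc 0 tf ×ˢ Icc xL xR) :=
    (uniqueDiffOn_Icc htf).prod (uniqueDiffOn_Icc hx)
  have hσ' := (ContinuouslyExtendableOn.of_continuousOn_of_isClosed hσ hK).mono interior_subset
  have hρ' := (ContinuouslyExtendableOn.of_continuousOn_of_isClosed hρ hK).mono interior_subset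
  have hT' := (ContinuouslyExtendableOn.of_continuousOn_of_isClosed hT.continuousOn hK).mono
    interior_subset
  have hTt := ContinuouslyExtendableOn.deriv_fst_of_contDiffOn hT hK hKu
  simp only [interior_prod_eq, interior_Icc] at hσ' hρ' hT' hTt
  have hres := continuouslyExtendableOn_temperatureResidual (a := a) (c := c) (Cv := Cv)
    hσ' hρ' hT' hTt
  exact (((hres.pow 2).intervalIntegral hx.le).intervalIntegral htf.le).continuous_of_univ

end Losses

/-- Asymptotic-preserving property of the micro–macro (APNN) governing-equation loss:
as `ε → 0⁺`, the loss converges to the residual loss of the limit system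
characterizing the nonlinear diffusion limit. -/
theorem apnn_loss_ap_property
    (a c Cv σ₀ : ℝ) (ha : 0 < a) (hc : 0 < c) (hCv : 0 < Cv) (hσ₀ : 0 < σ₀)
    (xL xR : ℝ) (hx : xL < xR) (tf : ℝ) (htf : 0 < tf)
    (σ : ℝ → ℝ → ℝ)
    (hσ : ContinuousOn (fun p : ℝ × ℝ => σ p.1 p.2)
      (Set.Icc (0 : ℝ) tf ×ˢ Set.Icc xL xR))
    (g : ℝ → ℝ → ℝ → ℝ) (ρ T : ℝ → ℝ → ℝ)
    (hg : ContDiffOn ℝ 1 (fun p : ℝ × ℝ × ℝ => g p.1 p.2.1 p.2.2)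
      (Set.Icc (0 : ℝ) tf ×ˢ (Set.Icc xL xR ×ˢ Set.Icc (-1 : ℝ) 1)))
    (hρ : ContDiffOn ℝ 1 (fun p : ℝ × ℝ => ρ p.1 p.2)
      (Set.Icc (0 : ℝ) tf ×ˢ Set.Icc xL xR))
    (hT : ContDiffOn ℝ 1 (fun p : ℝ × ℝ => T p.1 p.2)
      (Set.Icc (0 : ℝ) tf ×ˢ Set.Icc xL xR)) :
    Filter.Tendsto (fun ε : ℝ =>
      (∫ t in (0 : ℝ)..tf, ∫ x in xL..xR, ∫ μ in (-1 : ℝ)..1,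
        ((ε ^ 2 / c) * deriv (fun s => g s x μ) t + ε * μ * deriv (fun y => g t y μ) x
          - ε * avg (fun μ' => μ' * deriv (fun y => g t y μ') x)
          + Real.sqrt σ₀ * μ * deriv (fun y => ρ t y) x + σ t x * g t x μ) ^ 2)
      + (∫ t in (0 : ℝ)..tf, ∫ x in xL..xR,
        ((1 / c) * deriv (fun s => ρ s x) t
          + (1 / Real.sqrt σ₀) * avg (fun μ' => μ' * deriv (fun y => g t y μ') x)
          + (1 / 2) * Cv * deriv (fun s => T s x) t) ^ 2)
      + (∫ t in (0 : ℝ)..tf, ∫ x in xL..xR,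
        (ε ^ 2 * Cv * deriv (fun s => T s x) t
          - σ t x * (2 * ρ t x - a * c * (T t x) ^ 4)) ^ 2))
      (nhdsWithin 0 (Set.Ioi 0))
      (nhds
        ((∫ t in (0 : ℝ)..tf, ∫ x in xL..xR, ∫ μ in (-1 : ℝ)..1,
          (Real.sqrt σ₀ * μ * deriv (fun y => ρ t y) x + σ t x * g t x μ) ^ 2)
        + (∫ t in (0 : ℝ)..tf, ∫ x in xL..xR,
          ((1 / c) * deriv (fun s => ρ s x) t
            + (1 / Real.sqrt σ₀) * avg (fun μ' => μ' * deriv (fun y => g t y μ') x)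
            + (1 / 2) * Cv * deriv (fun s => T s x) t) ^ 2)
        + (∫ t in (0 : ℝ)..tf, ∫ x in xL..xR,
          (σ t x * (2 * ρ t x - a * c * (T t x) ^ 4)) ^ 2))) := by
  have micro_tendsto := ((continuous_microLoss (c := c) (σ₀ := σ₀) hx htf hσ hg hρ).tendsto' 0 _
    microLoss_zero).mono_left (nhdsWithin_le_nhds (s := Ioi 0))
  have temperature_tendsto := ((continuous_temperatureLoss (a := a) (c := c) (Cv := Cv) hx htf hσ
    hρ.continuousOn hT).tendsto' 0 _ temperatureLoss_zero).mono_left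
    (nhdsWithin_le_nhds (s := Ioi 0))
  exact (micro_tendsto.add tendsto_const_nhds).add temperature_tendsto
end

section
/- Let a, c, ε, σ₀ > 0 be constants, x_L < x_R real numbers, t_f > 0. Let σ, T, T*, r₁, r₃ : [0,t_f] × [x_L,x_R] → ℝ be continuous and r₂, Ĩ : [0,t_f] × [x_L,x_R] × [−1,1] → ℝ with Ĩ continuously differentiable and r₂ continuous. Suppose (ε²/c)∂_t Ĩ + σ Ĩ + ε μ ∂_x Ĩ + (1/2)r₃ − (σ a c/2)(T⁴ − T*⁴) = ε² r₁ + (ε/√σ₀) r₂ holds pointwise on (0,t_f) × (x_L,x_R) × (−1,1). Then for every t ∈ (0,t_f): (ε²/(2c))·(d/dt)∫_{x_L}^{x_R}∫_{−1}^{1} Ĩ² dμ dx + ∫_{x_L}^{x_R}∫_{−1}^{1} σ Ĩ² dμ dx + (ε/2)·( ∫_{0}^{1} μ·Ĩ(t,x_R,μ)² dμ + ∫_{−1}^{0} |μ|·Ĩ(t,x_L,μ)² dμ ) = ε² ∫∫ r₁ Ĩ dμ dx + (ε/√σ₀) ∫∫ r₂ Ĩ dμ dx − (1/2) ∫∫ r₃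 Ĩ dμ dx + (a c/2) ∫∫ σ (T⁴ − T*⁴) Ĩ dμ dx + (ε/2)·( ∫_{0}^{1} μ·Ĩ(t,x_L,μ)² dμ + ∫_{−1}^{0} |μ|·Ĩ(t,x_R,μ)² dμ ), where all double integrals are over (x_L,x_R) × (−1,1). -/
open MeasureTheory

/-!
Multiply the equation by its unknown `u` and integrate over the rectangle of positions and
directions. Since `u ∂ₜu = ½ ∂ₜ(u²)`, the time term is half the derivative of `∬ u²`; since
`μ u ∂ₓu = ½ ∂ₓ(μ u²)`, the transport term reduces to a flux through the two end points, and the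
sign of `μ` separates that flux into outflow and inflow.
-/

section

open Set Topology Function Interval

section

variable {E : Type*} [NormedAddCommGroup E] [NormedSpace ℝ E]

lemma exists_continuousOn_hasDerivAt_of_contDiffOn_prod {F : Type*} [NormedAddCommGroup F]
    [NormedSpace ℝ F] {f : ℝ → F → E} {s : Set ℝ} {K : Set F} (hs : UniqueDiffOn ℝ s)
    (hK : UniqueDiffOn ℝ K) (hf : ContDiffOn ℝ 1 (uncurry f) (s ×ˢ K)) :
    ∃ f' : ℝ → F → E, ContinuousOn (uncurry f') (s ×ˢ K) ∧
      ∀ r ∈ interior s, ∀ y ∈ K, HasDerivAt (f · y) (f' r y) r := by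
  refine ⟨fun r y ↦ fderivWithin ℝ (uncurry f) (s ×ˢ K) (r, y) (1, 0),
    (hf.continuousOn_fderivWithin (hs.prod hK) le_rfl).clm_apply continuousOn_const,
    fun r hr y hy ↦ ?_⟩
  have hline : HasDerivWithinAt (fun r' : ℝ ↦ (r', y)) ((1 : ℝ), (0 : F)) s r :=
    ((hasDerivAt_id r).prodMk (hasDerivAt_const r y)).hasDerivWithinAt
  have hfderiv := (hf.differentiableOn one_ne_zero (r, y)
    (mk_mem_prod (interior_subset hr) hy)).hasFDerivWithinAt
  exact (hfderiv.comp_hasDerivWithinAt r hline fun r' hr' ↦ mk_mem_prod hr' hy).hasDerivAt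
    (mem_interior_iff_mem_nhds.1 hr)

lemma hasDerivAt_setIntegral_of_continuousOn {X : Type*} [TopologicalSpace X]
    [MeasurableSpace X] [OpensMeasurableSpace X] {ν : Measure X} [IsFiniteMeasureOnCompacts ν]
    {f f' : ℝ → X → E} {s : Set ℝ} {K : Set X} {t : ℝ} (hs : IsCompact s) (hst : s ∈ 𝓝 t)
    (hK : IsCompact K) (hKm : MeasurableSet K) (hf : ∀ r ∈ s, ContinuousOn (f r) K)
    (hf' : ContinuousOn (uncurry f') (s ×ˢ K))
    (hderiv : ∀ r ∈ interior s, ∀ x ∈ K, HasDerivAt (f · x) (f' r x) r) :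
    HasDerivAt (fun r ↦ ∫ x in K, f r x ∂ν) (∫ x in K, f' t x ∂ν) t := by
  obtain ⟨C, hC⟩ := (hs.prod hK).exists_bound_of_continuousOn hf'
  have hinterior : interior s ∈ 𝓝 t := interior_mem_nhds.2 hst
  have hts : t ∈ s := mem_of_mem_nhds hst
  have hintegrable {g : X → E} (hg : ContinuousOn g K) : IntegrableOn g K ν :=
    hg.integrableOn_compact' hK hKm
  refine (hasDerivAt_integral_of_dominated_loc_of_deriv_le (bound := fun _ ↦ C) hinterior ?_
    (hintegrable (hf t hts)) (hintegrable (hf'.uncurry_left t hts)).aestronglyMeasurable ?_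
    (integrableOn_const hK.measure_ne_top) ?_).2
  · filter_upwards [hst] with r hr using (hintegrable (hf r hr)).aestronglyMeasurable
  · filter_upwards [ae_restrict_mem hKm] with x hx r hr using hC (r, x) ⟨interior_subset hr, hx⟩
  · filter_upwards [ae_restrict_mem hKm] with x hx r hr using hderiv r hr x hx

variable {a b c d : ℝ}

lemma intervalIntegral_intervalIntegral_eq_setIntegral_Icc_prod_Icc (hab : a ≤ b) (hcd : c ≤ d)
    {f : ℝ → ℝ → E} (hf : IntegrableOn (uncurry f) (Icc a b ×ˢ Icc c d)) :
    ∫ x in a..b, ∫ y in c..d, f x y = ∫ p in Icc a b ×ˢ Icc c d, f p.1 p.2 := by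
  rw [Measure.volume_eq_prod] at hf ⊢
  simp_rw [intervalIntegral.integral_of_le hab, intervalIntegral.integral_of_le hcd,
    ← integral_Icc_eq_integral_Ioc]
  exact (setIntegral_prod _ hf).symm

lemma setIntegral_Icc_prod_Icc_congr_Ioo {f g : ℝ × ℝ → E}
    (h : EqOn f g (Ioo a b ×ˢ Ioo c d)) :
    ∫ p in Icc a b ×ˢ Icc c d, f p = ∫ p in Icc a b ×ˢ Icc c d, g p := by
  have hae : (Ioo a b ×ˢ Ioo c d : Set (ℝ × ℝ)) =ᵐ[volume] Icc a b ×ˢ Icc c d :=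
    Measure.set_prod_ae_eq Ioo_ae_eq_Icc Ioo_ae_eq_Icc
  rw [← setIntegral_congr_set hae, ← setIntegral_congr_set hae]
  exact setIntegral_congr_fun (measurableSet_Ioo.prod measurableSet_Ioo) h

lemma setIntegral_Icc_prod_Icc_eq_sub_of_hasDerivAt_fst [CompleteSpace E] (hab : a ≤ b)
    (hcd : c ≤ d) {f f' : ℝ → ℝ → E} (hf : ContinuousOn (uncurry f) (Icc a b ×ˢ Icc c d))
    (hf' : ContinuousOn (uncurry f') (Icc a b ×ˢ Icc c d))
    (hderiv : ∀ x ∈ Ioo a b, ∀ y ∈ Icc c d, HasDerivAt (f · y) (f' x y) x) :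
    ∫ p in Icc a b ×ˢ Icc c d, f' p.1 p.2 = (∫ y in c..d, f b y) - ∫ y in c..d, f a y := by
  have hint : IntegrableOn (uncurry f') (Icc a b ×ˢ Icc c d) :=
    hf'.integrableOn_compact (isCompact_Icc.prod isCompact_Icc)
  have hslice {x : ℝ} (hx : x ∈ Icc a b) : IntervalIntegrable (f x) volume c d :=
    ContinuousOn.intervalIntegrable_of_Icc hcd (hf.uncurry_left x hx)
  have hFTC {y : ℝ} (hy : y ∈ Icc c d) : ∫ x in a..b, f' x y = f b y - f a y :=
    intervalIntegral.integral_eq_sub_of_hasDerivAt_of_le hab (hf.uncurry_right y hy)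
      (fun x hx ↦ hderiv x hx y hy)
      (ContinuousOn.intervalIntegrable_of_Icc hab (hf'.uncurry_right y hy))
  have hswap : IntegrableOn (uncurry f') (Ι a b ×ˢ Ι c d) := by
    rw [uIoc_of_le hab, uIoc_of_le hcd]
    exact hint.mono_set (prod_mono Ioc_subset_Icc_self Ioc_subset_Icc_self)
  calc ∫ p in Icc a b ×ˢ Icc c d, f' p.1 p.2
      = ∫ y in c..d, ∫ x in a..b, f' x y := by
        rw [← intervalIntegral_intervalIntegral_eq_setIntegral_Icc_prod_Icc hab hcd hint,
          intervalIntegral_intervalIntegral_swap hswap]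
    _ = ∫ y in c..d, (f b y - f a y) :=
        intervalIntegral.integral_congr fun y hy ↦ hFTC (uIcc_of_le hcd ▸ hy)
    _ = (∫ y in c..d, f b y) - ∫ y in c..d, f a y :=
        intervalIntegral.integral_sub (hslice (right_mem_Icc.2 hab)) (hslice (left_mem_Icc.2 hab))

end

lemma hasDerivAt_sq {f : ℝ → ℝ} {f' x : ℝ} (hf : HasDerivAt f f' x) :
    HasDerivAt (fun y ↦ f y ^ 2) (2 * (f x * f')) x := by
  simpa [mul_assoc] using hf.fun_pow 2

lemma integral_mul_eq_sub_integral_abs_mul {m M : ℝ} (hm : m ≤ 0) (hM : 0 ≤ M) {h : ℝ → ℝ}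
    (hh : ContinuousOn h (Icc m M)) :
    ∫ μ in m..M, μ * h μ = (∫ μ in (0 : ℝ)..M, μ * h μ) - ∫ μ in m..(0 : ℝ), |μ| * h μ := by
  have hcont : ContinuousOn (fun μ ↦ μ * h μ) (Icc m M) := continuousOn_id.mul hh
  have hneg : IntervalIntegrable (fun μ ↦ μ * h μ) volume m 0 :=
    ContinuousOn.intervalIntegrable_of_Icc hm (hcont.mono (Icc_subset_Icc_right hM))
  have hpos : IntervalIntegrable (fun μ ↦ μ * h μ) volume 0 M :=
    ContinuousOn.intervalIntegrable_of_Icc hM (hcont.mono (Icc_subset_Icc_left hm))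
  have habs : ∫ μ in m..(0 : ℝ), |μ| * h μ = -∫ μ in m..(0 : ℝ), μ * h μ := by
    rw [← intervalIntegral.integral_neg]
    refine intervalIntegral.integral_congr fun μ hμ ↦ ?_
    rw [uIcc_of_le hm] at hμ
    simp only [abs_of_nonpos hμ.2, neg_mul]
  rw [← intervalIntegral.integral_add_adjacent_intervals hneg hpos, habs]
  ring

lemma deriv_integral_integral_sq {t₀ t₁ t a b c d : ℝ} (ht : t ∈ Ioo t₀ t₁) (hab : a ≤ b)
    (hcd : c ≤ d) {u u' : ℝ → ℝ × ℝ → ℝ}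
    (hu : ContinuousOn (uncurry u) (Icc t₀ t₁ ×ˢ (Icc a b ×ˢ Icc c d)))
    (hu' : ContinuousOn (uncurry u') (Icc t₀ t₁ ×ˢ (Icc a b ×ˢ Icc c d)))
    (hderiv : ∀ s ∈ Ioo t₀ t₁, ∀ p ∈ Icc a b ×ˢ Icc c d, HasDerivAt (u · p) (u' s p) s) :
    deriv (fun s ↦ ∫ x in a..b, ∫ y in c..d, u s (x, y) ^ 2) t =
      2 * ∫ p in Icc a b ×ˢ Icc c d, u t p * u' t p := by
  have hbox : IsCompact (Icc a b ×ˢ Icc c d) := isCompact_Icc.prod isCompact_Icc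
  have hset : HasDerivAt (fun s ↦ ∫ p in Icc a b ×ˢ Icc c d, u s p ^ 2)
      (∫ p in Icc a b ×ˢ Icc c d, 2 * (u t p * u' t p)) t := by
    refine hasDerivAt_setIntegral_of_continuousOn (f' := fun s p ↦ 2 * (u s p * u' s p))
      isCompact_Icc (Icc_mem_nhds ht.1 ht.2) hbox hbox.measurableSet
      (fun s hs ↦ (hu.uncurry_left s hs).pow 2) (continuousOn_const.mul (hu.mul hu'))
      fun s hs p hp ↦ ?_
    rw [interior_Icc] at hs
    exact hasDerivAt_sq (hderiv s hs p hp)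
  have hiter : (fun s ↦ ∫ x in a..b, ∫ y in c..d, u s (x, y) ^ 2) =ᶠ[𝓝 t]
      fun s ↦ ∫ p in Icc a b ×ˢ Icc c d, u s p ^ 2 := by
    filter_upwards [Icc_mem_nhds ht.1 ht.2] with s hs
    exact intervalIntegral_intervalIntegral_eq_setIntegral_Icc_prod_Icc hab hcd
      (((hu.uncurry_left s hs).pow 2).integrableOn_compact hbox)
  rw [hiter.deriv_eq, hset.deriv, integral_const_mul]

lemma two_mul_setIntegral_mul_mul_deriv_fst {a b m M : ℝ} (hab : a ≤ b) (hm : m ≤ 0)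
    (hM : 0 ≤ M) {u u' : ℝ → ℝ → ℝ} (hu : ContinuousOn (uncurry u) (Icc a b ×ˢ Icc m M))
    (hu' : ContinuousOn (uncurry u') (Icc a b ×ˢ Icc m M))
    (hderiv : ∀ x ∈ Ioo a b, ∀ μ ∈ Icc m M, HasDerivAt (u · μ) (u' x μ) x) :
    2 * ∫ p in Icc a b ×ˢ Icc m M, p.2 * (u p.1 p.2 * u' p.1 p.2) =
      ((∫ μ in (0 : ℝ)..M, μ * u b μ ^ 2) + ∫ μ in m..(0 : ℝ), |μ| * u a μ ^ 2) -
      ((∫ μ in (0 : ℝ)..M, μ * u a μ ^ 2) + ∫ μ in m..(0 : ℝ), |μ| * u b μ ^ 2) := by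
  have hflux : ∫ p in Icc a b ×ˢ Icc m M, p.2 * (2 * (u p.1 p.2 * u' p.1 p.2)) =
      (∫ μ in m..M, μ * u b μ ^ 2) - ∫ μ in m..M, μ * u a μ ^ 2 :=
    setIntegral_Icc_prod_Icc_eq_sub_of_hasDerivAt_fst (f := fun x μ ↦ μ * u x μ ^ 2)
      (f' := fun x μ ↦ μ * (2 * (u x μ * u' x μ))) hab (hm.trans hM)
      (continuousOn_snd.mul (hu.pow 2))
      (continuousOn_snd.mul (continuousOn_const.mul (hu.mul hu')))
      fun x hx μ hμ ↦ (hasDerivAt_sq (hderiv x hx μ hμ)).const_mul μ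
  have hsplit {x : ℝ} (hx : x ∈ Icc a b) : ∫ μ in m..M, μ * u x μ ^ 2 =
      (∫ μ in (0 : ℝ)..M, μ * u x μ ^ 2) - ∫ μ in m..(0 : ℝ), |μ| * u x μ ^ 2 :=
    integral_mul_eq_sub_integral_abs_mul hm hM ((hu.uncurry_left x hx).pow 2)
  simp_rw [mul_left_comm _ (2 : ℝ), integral_const_mul] at hflux
  rw [hflux, hsplit (left_mem_Icc.2 hab), hsplit (right_mem_Icc.2 hab)]
  ring

lemma setIntegral_balance_of_transport_eq {ι : Type*} [Fintype ι] {a b c d : ℝ} (hab : a ≤ b)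
    (hcd : c ≤ d) {v vt vx σ : ℝ → ℝ → ℝ} {f : ι → ℝ → ℝ → ℝ} {α β : ℝ} {k : ι → ℝ}
    (hv : ContinuousOn (uncurry v) (Icc a b ×ˢ Icc c d))
    (hvt : ContinuousOn (uncurry vt) (Icc a b ×ˢ Icc c d))
    (hvx : ContinuousOn (uncurry vx) (Icc a b ×ˢ Icc c d))
    (hσ : ContinuousOn (uncurry σ) (Icc a b ×ˢ Icc c d))
    (hf : ∀ i, ContinuousOn (uncurry (f i)) (Icc a b ×ˢ Icc c d))
    (heq : ∀ x ∈ Ioo a b, ∀ μ ∈ Ioo c d,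
      α * vt x μ + σ x μ * v x μ + β * μ * vx x μ = ∑ i, k i * f i x μ) :
    α * (∫ p in Icc a b ×ˢ Icc c d, v p.1 p.2 * vt p.1 p.2)
        + (∫ x in a..b, ∫ μ in c..d, σ x μ * v x μ ^ 2)
        + β * (∫ p in Icc a b ×ˢ Icc c d, p.2 * (v p.1 p.2 * vx p.1 p.2))
      = ∑ i, k i * ∫ x in a..b, ∫ μ in c..d, f i x μ * v x μ := by
  have hint {g : ℝ × ℝ → ℝ} (hg : ContinuousOn g (Icc a b ×ˢ Icc c d)) :
      IntegrableOn g (Icc a b ×ˢ Icc c d) :=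
    hg.integrableOn_compact (isCompact_Icc.prod isCompact_Icc)
  have htime : IntegrableOn (fun p ↦ α * (v p.1 p.2 * vt p.1 p.2)) (Icc a b ×ˢ Icc c d) :=
    (hint (hv.mul hvt)).const_mul α
  have habsorption : IntegrableOn (fun p ↦ σ p.1 p.2 * v p.1 p.2 ^ 2) (Icc a b ×ˢ Icc c d) :=
    hint (hσ.mul (hv.pow 2))
  have hflux : IntegrableOn (fun p ↦ β * (p.2 * (v p.1 p.2 * vx p.1 p.2)))
      (Icc a b ×ˢ Icc c d) :=
    (hint (continuousOn_snd.mul (hv.mul hvx))).const_mul β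
  have hsource (i : ι) : IntegrableOn (fun p ↦ f i p.1 p.2 * v p.1 p.2) (Icc a b ×ˢ Icc c d) :=
    hint ((hf i).mul hv)
  have htested : ∫ p in Icc a b ×ˢ Icc c d, (α * (v p.1 p.2 * vt p.1 p.2)
        + σ p.1 p.2 * v p.1 p.2 ^ 2 + β * (p.2 * (v p.1 p.2 * vx p.1 p.2))) =
      ∫ p in Icc a b ×ˢ Icc c d, ∑ i, k i * (f i p.1 p.2 * v p.1 p.2) := by
    refine setIntegral_Icc_prod_Icc_congr_Ioo fun p hp ↦ ?_
    simp only [← mul_assoc, ← Finset.sum_mul, ← heq p.1 hp.1 p.2 hp.2]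
    ring
  rw [integral_add (htime.fun_add habsorption) hflux, integral_add htime habsorption,
    integral_finsetSum _ fun i _ ↦ (hsource i).const_mul (k i)] at htested
  simp_rw [integral_const_mul] at htested
  rw [intervalIntegral_intervalIntegral_eq_setIntegral_Icc_prod_Icc hab hcd
    (f := fun x μ ↦ σ x μ * v x μ ^ 2) habsorption]
  refine htested.trans (Finset.sum_congr rfl fun i _ ↦ ?_)
  rw [intervalIntegral_intervalIntegral_eq_setIntegral_Icc_prod_Icc hab hcd
    (f := fun x μ ↦ f i x μ * v x μ) (hsource i)]

theorem energy_identity_for_intensity_error_general {ι : Type*} [Fintype ι]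
    {t₀ t₁ t xL xR m M : ℝ} (ht : t ∈ Ioo t₀ t₁) (hx : xL < xR) (hm : m < 0) (hM : 0 < M)
    {u : ℝ → ℝ → ℝ → ℝ} {σ : ℝ → ℝ → ℝ} {f : ι → ℝ → ℝ → ℝ} (α β : ℝ) (k : ι → ℝ)
    (hu : ContDiffOn ℝ 1 (fun p : ℝ × ℝ × ℝ ↦ u p.1 p.2.1 p.2.2)
      (Icc t₀ t₁ ×ˢ (Icc xL xR ×ˢ Icc m M)))
    (hσ : ContinuousOn (uncurry σ) (Icc xL xR ×ˢ Icc m M))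
    (hf : ∀ i, ContinuousOn (uncurry (f i)) (Icc xL xR ×ˢ Icc m M))
    (heq : ∀ x ∈ Ioo xL xR, ∀ μ ∈ Ioo m M,
      α * deriv (fun s ↦ u s x μ) t + σ x μ * u t x μ + β * μ * deriv (fun y ↦ u t y μ) x =
        ∑ i, k i * f i x μ) :
    α / 2 * deriv (fun s ↦ ∫ x in xL..xR, ∫ μ in m..M, u s x μ ^ 2) t
        + (∫ x in xL..xR, ∫ μ in m..M, σ x μ * u t x μ ^ 2)
        + β / 2 * ((∫ μ in (0 : ℝ)..M, μ * u t xR μ ^ 2) + ∫ μ in m..(0 : ℝ), |μ| * u t xL μ ^ 2)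
      = ∑ i, k i * (∫ x in xL..xR, ∫ μ in m..M, f i x μ * u t x μ)
        + β / 2 * ((∫ μ in (0 : ℝ)..M, μ * u t xL μ ^ 2)
          + ∫ μ in m..(0 : ℝ), |μ| * u t xR μ ^ 2) := by
  have hmM : m < M := hm.trans hM
  have htI : t ∈ Icc t₀ t₁ := Ioo_subset_Icc_self ht
  have hunique : UniqueDiffOn ℝ (Icc xL xR ×ˢ Icc m M) :=
    (uniqueDiffOn_Icc hx).prod (uniqueDiffOn_Icc hmM)
  have hslice : ContDiffOn ℝ 1 (uncurry (u t)) (Icc xL xR ×ˢ Icc m M) :=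
    hu.comp (contDiff_prodMk_right t).contDiffOn fun p hp ↦ ⟨htI, hp⟩
  obtain ⟨ut, hut, hderivt⟩ := exists_continuousOn_hasDerivAt_of_contDiffOn_prod
    (f := fun s (p : ℝ × ℝ) ↦ u s p.1 p.2) (uniqueDiffOn_Icc (ht.1.trans ht.2)) hunique hu
  obtain ⟨ux, hux, hderivx⟩ := exists_continuousOn_hasDerivAt_of_contDiffOn_prod
    (uniqueDiffOn_Icc hx) (uniqueDiffOn_Icc hmM) hslice
  rw [interior_Icc] at hderivt hderivx
  have henergy := deriv_integral_integral_sq (u := fun s p ↦ u s p.1 p.2) ht hx.le hmM.le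
    hu.continuousOn hut hderivt
  have hflux := two_mul_setIntegral_mul_mul_deriv_fst hx.le hm.le hM.le hslice.continuousOn hux
    hderivx
  have hbalance := setIntegral_balance_of_transport_eq (vt := fun x μ ↦ ut t (x, μ)) hx.le hmM.le
    hslice.continuousOn (hut.uncurry_left t htI) hux hσ hf fun x hx μ hμ ↦ by
      have hμ' := Ioo_subset_Icc_self hμ
      rw [← heq x hx μ hμ, (hderivx x hx μ hμ').deriv,
        (hderivt t ht (x, μ) ⟨Ioo_subset_Icc_self hx, hμ'⟩).deriv]
  linear_combination hbalance + α / 2 * henergy - β / 2 * hflux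

end

/-- The basic L² energy identity obtained by testing the combined residual transport
equation for the intensity error `Ĩ` by `Ĩ` and integrating over the slab `(x_L,x_R)`
and the angular variable `μ ∈ (−1,1)`. -/
theorem energy_identity_for_intensity_error
    (a c ε σ₀ : ℝ) (ha : 0 < a) (hc : 0 < c) (hε : 0 < ε) (hσ₀ : 0 < σ₀)
    (xL xR : ℝ) (hx : xL < xR) (tf : ℝ) (htf : 0 < tf)
    (σ T Tstar r1 r3 : ℝ → ℝ → ℝ) (r2 It : ℝ → ℝ → ℝ → ℝ)
    (hσ : ContinuousOn (fun p : ℝ × ℝ => σ p.1 p.2)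
      (Set.Icc (0 : ℝ) tf ×ˢ Set.Icc xL xR))
    (hT : ContinuousOn (fun p : ℝ × ℝ => T p.1 p.2)
      (Set.Icc (0 : ℝ) tf ×ˢ Set.Icc xL xR))
    (hTstar : ContinuousOn (fun p : ℝ × ℝ => Tstar p.1 p.2)
      (Set.Icc (0 : ℝ) tf ×ˢ Set.Icc xL xR))
    (hr1 : ContinuousOn (fun p : ℝ × ℝ => r1 p.1 p.2)
      (Set.Icc (0 : ℝ) tf ×ˢ Set.Icc xL xR))
    (hr3 : ContinuousOn (fun p : ℝ × ℝ => r3 p.1 p.2)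
      (Set.Icc (0 : ℝ) tf ×ˢ Set.Icc xL xR))
    (hr2 : ContinuousOn (fun p : ℝ × ℝ × ℝ => r2 p.1 p.2.1 p.2.2)
      (Set.Icc (0 : ℝ) tf ×ˢ (Set.Icc xL xR ×ˢ Set.Icc (-1 : ℝ) 1)))
    (hIt : ContDiffOn ℝ 1 (fun p : ℝ × ℝ × ℝ => It p.1 p.2.1 p.2.2)
      (Set.Icc (0 : ℝ) tf ×ˢ (Set.Icc xL xR ×ˢ Set.Icc (-1 : ℝ) 1)))
    (heq : ∀ t ∈ Set.Ioo (0 : ℝ) tf, ∀ x ∈ Set.Ioo xL xR, ∀ μ ∈ Set.Ioo (-1 : ℝ) 1,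
      (ε ^ 2 / c) * deriv (fun s => It s x μ) t + σ t x * It t x μ
          + ε * μ * deriv (fun y => It t y μ) x + (1 / 2) * r3 t x
          - (σ t x * a * c / 2) * ((T t x) ^ 4 - (Tstar t x) ^ 4)
        = ε ^ 2 * r1 t x + (ε / Real.sqrt σ₀) * r2 t x μ) :
    ∀ t ∈ Set.Ioo (0 : ℝ) tf,
      (ε ^ 2 / (2 * c)) *
          deriv (fun s => ∫ x in xL..xR, ∫ μ in (-1 : ℝ)..1, (It s x μ) ^ 2) t
        + (∫ x in xL..xR, ∫ μ in (-1 : ℝ)..1, σ t x * (It t x μ) ^ 2)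
        + (ε / 2) * ((∫ μ in (0 : ℝ)..1, μ * (It t xR μ) ^ 2)
            + (∫ μ in (-1 : ℝ)..0, |μ| * (It t xL μ) ^ 2))
      = ε ^ 2 * (∫ x in xL..xR, ∫ μ in (-1 : ℝ)..1, r1 t x * It t x μ)
        + (ε / Real.sqrt σ₀) * (∫ x in xL..xR, ∫ μ in (-1 : ℝ)..1, r2 t x μ * It t x μ)
        - (1 / 2) * (∫ x in xL..xR, ∫ μ in (-1 : ℝ)..1, r3 t x * It t x μ)
        + (a * c / 2) * (∫ x in xL..xR, ∫ μ in (-1 : ℝ)..1,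
            σ t x * ((T t x) ^ 4 - (Tstar t x) ^ 4) * It t x μ)
        + (ε / 2) * ((∫ μ in (0 : ℝ)..1, μ * (It t xL μ) ^ 2)
            + (∫ μ in (-1 : ℝ)..0, |μ| * (It t xR μ) ^ 2)) := by
  intro t ht
  have htI : t ∈ Set.Icc 0 tf := Set.Ioo_subset_Icc_self ht
  have hdata {g : ℝ → ℝ → ℝ}
      (hg : ContinuousOn (fun p : ℝ × ℝ ↦ g p.1 p.2) (Set.Icc 0 tf ×ˢ Set.Icc xL xR)) :
      ContinuousOn (fun p : ℝ × ℝ ↦ g t p.1) (Set.Icc xL xR ×ˢ Set.Icc (-1) 1) :=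
    (hg.uncurry_left (f := g) t htI).comp continuousOn_fst fun p hp ↦ hp.1
  let source : Fin 4 → ℝ → ℝ → ℝ := ![fun x _ ↦ r1 t x, r2 t, fun x _ ↦ r3 t x,
    fun x _ ↦ σ t x * (T t x ^ 4 - Tstar t x ^ 4)]
  have hsource : ∀ i, ContinuousOn (Function.uncurry (source i))
      (Set.Icc xL xR ×ˢ Set.Icc (-1) 1) := by
    simp only [Fin.forall_fin_succ]
    exact ⟨hdata hr1, hr2.uncurry_left (f := fun s (p : ℝ × ℝ) ↦ r2 s p.1 p.2) t htI, hdata hr3,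
      (hdata hσ).mul (((hdata hT).pow 4).sub ((hdata hTstar).pow 4)), fun i ↦ i.elim0⟩
  have hidentity := energy_identity_for_intensity_error_general ht hx neg_one_lt_zero one_pos
    (σ := fun x _ ↦ σ t x) (ε ^ 2 / c) ε ![ε ^ 2, ε / Real.sqrt σ₀, -(1 / 2), a * c / 2] hIt
    (hdata hσ) hsource fun x hx μ hμ ↦ by
      simp only [source, Fin.sum_univ_four, Matrix.cons_val]
      linear_combination heq t ht x hx μ hμ
  simp only [source, Fin.sum_univ_four, Matrix.cons_val] at hidentity
  linear_combination hidentity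
end

section
/- In the setting of the energy identity for Ĩ (i.e., (ε²/c)∂_t Ĩ + σ Ĩ + ε μ ∂_x Ĩ + (1/2)r₃ − (σ a c/2)(T⁴ − T*⁴) = ε² r₁ + (ε/√σ₀) r₂ pointwise, with Ĩ continuously differentiable), assume in addition 0 < σ_min ≤ σ(t,x) ≤ σ_max, 0 < T_min ≤ T(t,x), T*(t,x) ≤ T_max for all (t,x), set T̃ = T − T*, and suppose the inflow boundary values satisfy Ĩ(t,x_L,μ) = r₅ᴸ(t,μ) for μ ∈ (0,1) and Ĩ(t,x_R,μ) = r₅ᴿ(t,μ) for μ ∈ (−1,0). Then for every α₁ > 0 and every t ∈ (0,t_f): (ε²/(2c))·(d/dt)‖Ĩ(t)‖² + σ_min·‖Ĩ(t)‖² ≤ 4α₁·‖Ĩ(t)‖² + (ε⁴/(2α₁))·‖r₁(t)‖²_x + (ε²/(4α₁σ₀))·‖r₂(t)‖² + (1/(8α₁))·‖r₃(t)‖²_x + (2(a c σ_max T_max³)²/α₁)·‖T̃(t)‖²_x + (ε/2)·( ∫_0^1 r₅ᴸ(t,μ)² dμ + ∫_{−1}^0 r₅ᴿ(t,μ)² dμ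 ), where ‖·‖ denotes the L² norm over (x_L,x_R) × (−1,1) and ‖·‖_x the L² norm over (x_L,x_R). -/
open MeasureTheory

/-!
Testing the transport equation with `Ĩ` gives, pointwise, a bound on
`(ε² / 2c) ∂ₜ(Ĩ²) + (ε / 2) μ ∂ₓ(Ĩ²)` by squares: the absorption term contributes `-σmin Ĩ²`, and
each of the four source terms costs `α₁ Ĩ²` by Young's inequality, the emission term being
controlled by the Lipschitz bound for `T ↦ T⁴`. Integrating over the slab, the `∂ₜ` term becomes
the time derivative of the energy, and the `∂ₓ` term becomes a boundary flux whose outflow part is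
nonnegative and whose inflow part is at most the inflow data because `|μ| ≤ 1`. Terms depending on
`x` alone pick up the factor `2 = |(-1, 1)|`.
-/

section

open Set

section PartialDerivative

variable {E F : Type*} [NormedAddCommGroup E] [NormedSpace ℝ E] [NormedAddCommGroup F]
  [NormedSpace ℝ F] {f : ℝ × F → E} {s : Set ℝ} {K : Set F} {a b t : ℝ} {y : F}

lemma hasDerivWithinAt_comp_prodMk_left (hf : DifferentiableOn ℝ f (s ×ˢ K)) (ht : t ∈ s)
    (hy : y ∈ K) :
    HasDerivWithinAt (fun r => f (r, y)) (fderivWithin ℝ f (s ×ˢ K) (t, y) (1, 0)) s t :=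
  HasFDerivWithinAt.comp_hasDerivWithinAt (t := s ×ˢ K) t
    (hf (t, y) ⟨ht, hy⟩).hasFDerivWithinAt
    ((hasDerivWithinAt_id t s).prodMk (hasDerivWithinAt_const t s y)) fun _ hr => ⟨hr, hy⟩

lemma continuousOn_derivWithin_comp_prodMk_left (hf : ContDiffOn ℝ 1 f (s ×ˢ K))
    (hs : UniqueDiffOn ℝ s) (hK : UniqueDiffOn ℝ K) :
    ContinuousOn (fun p : ℝ × F => derivWithin (fun r => f (r, p.2)) s p.1) (s ×ˢ K) :=
  ((hf.continuousOn_fderivWithin (hs.prod hK) le_rfl).clm_apply continuousOn_const).congr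
    fun p hp => (hasDerivWithinAt_comp_prodMk_left (hf.differentiableOn one_ne_zero)
      hp.1 hp.2).derivWithin (hs p.1 hp.1)

lemma differentiableAt_comp_prodMk_left (hf : DifferentiableOn ℝ f (Icc a b ×ˢ K))
    (ht : t ∈ Ioo a b) (hy : y ∈ K) : DifferentiableAt ℝ (fun r => f (r, y)) t :=
  (hasDerivWithinAt_comp_prodMk_left hf (Ioo_subset_Icc_self ht) hy).differentiableWithinAt
    |>.differentiableAt (Icc_mem_nhds ht.1 ht.2)

lemma contDiffOn_comp_prodMk_right {n : WithTop ℕ∞} (hf : ContDiffOn ℝ n f (s ×ˢ K))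
    (ht : t ∈ s) : ContDiffOn ℝ n (fun y => f (t, y)) K :=
  hf.comp (by fun_prop) fun _ hy => ⟨ht, hy⟩

theorem hasDerivAt_setIntegral_of_contDiffOn [MeasurableSpace F] [BorelSpace F] {ν : Measure F}
    [IsFiniteMeasureOnCompacts ν] (hK : IsCompact K) (hKd : UniqueDiffOn ℝ K)
    (hf : ContDiffOn ℝ 1 f (Icc a b ×ˢ K)) (ht : t ∈ Ioo a b) :
    HasDerivAt (fun r => ∫ y in K, f (r, y) ∂ν)
      (∫ y in K, derivWithin (fun r => f (r, y)) (Icc a b) t ∂ν) t := by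
  have hf' := continuousOn_derivWithin_comp_prodMk_left hf
    (uniqueDiffOn_Icc (ht.1.trans ht.2)) hKd
  obtain ⟨C, hC⟩ := (isCompact_Icc.prod hK).exists_bound_of_continuousOn hf'
  have integrable_slice {g : ℝ × F → E} (hg : ContinuousOn g (Icc a b ×ˢ K)) {r : ℝ}
      (hr : r ∈ Ioo a b) : IntegrableOn (fun y => g (r, y)) K ν :=
    (hg.comp (by fun_prop) fun y hy => ⟨Ioo_subset_Icc_self hr, hy⟩).integrableOn_compact hK
  refine (hasDerivAt_integral_of_dominated_loc_of_deriv_le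
    (F := fun r y => f (r, y)) (F' := fun r y => derivWithin (fun r => f (r, y)) (Icc a b) r)
    (bound := fun _ => C)
    (Ioo_mem_nhds ht.1 ht.2) ?_ (integrable_slice hf.continuousOn ht)
    (integrable_slice hf' ht).aestronglyMeasurable ?_
    (integrableOn_const hK.measure_ne_top) ?_).2
  · filter_upwards [Ioo_mem_nhds ht.1 ht.2] with r hr
    exact (integrable_slice hf.continuousOn hr).aestronglyMeasurable
  · filter_upwards [ae_restrict_mem hK.measurableSet] with y hy r hr
    exact hC (r, y) ⟨Ioo_subset_Icc_self hr, hy⟩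
  · filter_upwards [ae_restrict_mem hK.measurableSet] with y hy r hr
    have hd := differentiableAt_comp_prodMk_left (hf.differentiableOn one_ne_zero) hr hy
    rw [derivWithin_of_mem_nhds (Icc_mem_nhds hr.1 hr.2)]
    exact hd.hasDerivAt

end PartialDerivative

section Rectangle

variable {E : Type*} [NormedAddCommGroup E] {a b c d : ℝ}

lemma integrableOn_Icc_prod_Icc_comp_fst {f : ℝ → E} (hab : a ≤ b)
    (hf : IntervalIntegrable f volume a b) :
    IntegrableOn (fun p : ℝ × ℝ => f p.1) (Icc a b ×ˢ Icc c d) := by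
  rw [IntegrableOn, Measure.volume_eq_prod, ← Measure.prod_restrict]
  exact ((intervalIntegrable_iff_integrableOn_Icc_of_le hab).1 hf).comp_fst _

lemma ae_restrict_Icc_prod_Icc_of_forall_mem_Ioo {P : ℝ × ℝ → Prop}
    (h : ∀ x ∈ Ioo a b, ∀ y ∈ Ioo c d, P (x, y)) :
    ∀ᵐ p ∂volume.restrict (Icc a b ×ˢ Icc c d), P p := by
  rw [Measure.volume_eq_prod,
    ← Measure.restrict_congr_set (Measure.set_prod_ae_eq Ioo_ae_eq_Icc Ioo_ae_eq_Icc)]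
  filter_upwards [ae_restrict_mem (measurableSet_Ioo.prod measurableSet_Ioo)] with p hp
  exact h p.1 hp.1 p.2 hp.2

variable [NormedSpace ℝ E]

lemma intervalIntegral_intervalIntegral_eq_setIntegral_prod {f : ℝ × ℝ → E} (hab : a ≤ b)
    (hcd : c ≤ d) (hf : IntegrableOn f (Icc a b ×ˢ Icc c d)) :
    ∫ x in a..b, ∫ y in c..d, f (x, y) = ∫ p in Icc a b ×ˢ Icc c d, f p := by
  simp only [intervalIntegral.integral_of_le hab, intervalIntegral.integral_of_le hcd,
    ← integral_Icc_eq_integral_Ioc]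
  exact (setIntegral_prod f hf).symm

lemma intervalIntegral_intervalIntegral_swap_eq_setIntegral_prod {f : ℝ × ℝ → E} (hab : a ≤ b)
    (hcd : c ≤ d) (hf : IntegrableOn f (Icc a b ×ˢ Icc c d)) :
    ∫ y in c..d, ∫ x in a..b, f (x, y) = ∫ p in Icc a b ×ˢ Icc c d, f p :=
  (intervalIntegral_intervalIntegral_eq_setIntegral_prod hcd hab hf.swap).trans
    (setIntegral_prod_swap (Icc a b) (Icc c d) f)

lemma setIntegral_Icc_prod_Icc_comp_fst (f : ℝ → E) (hab : a ≤ b) (hcd : c ≤ d) :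
    ∫ p in Icc a b ×ˢ Icc c d, f p.1 = (d - c) • ∫ x in a..b, f x := by
  rw [Measure.volume_eq_prod, ← Measure.prod_restrict, integral_fun_fst,
    intervalIntegral.integral_of_le hab, integral_Icc_eq_integral_Ioc]
  simp [hcd]

lemma setIntegral_Icc_prod_Icc_linear_combination {u v : ℝ × ℝ → ℝ} {f g h : ℝ → ℝ}
    (hab : a ≤ b) (hcd : c ≤ d) (hu : IntegrableOn u (Icc a b ×ˢ Icc c d))
    (hv : IntegrableOn v (Icc a b ×ˢ Icc c d)) (hf : IntervalIntegrable f volume a b)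
    (hg : IntervalIntegrable g volume a b) (hh : IntervalIntegrable h volume a b)
    (k₁ k₂ l₁ l₂ l₃ : ℝ) :
    ∫ p in Icc a b ×ˢ Icc c d, (k₁ * u p + k₂ * v p + (l₁ * f p.1 + l₂ * g p.1 + l₃ * h p.1))
      = k₁ * (∫ x in a..b, ∫ y in c..d, u (x, y)) + k₂ * (∫ x in a..b, ∫ y in c..d, v (x, y))
        + (d - c)
          * (l₁ * (∫ x in a..b, f x) + l₂ * (∫ x in a..b, g x) + l₃ * ∫ x in a..b, h x) := by
  have huv : IntegrableOn (fun p => k₁ * u p + k₂ * v p) (Icc a b ×ˢ Icc c d) :=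
    (hu.const_mul k₁).add (hv.const_mul k₂)
  have hfg := (hf.const_mul l₁).add (hg.const_mul l₂)
  rw [integral_add huv
      (integrableOn_Icc_prod_Icc_comp_fst hab (hfg.add (hh.const_mul l₃))),
    integral_add (hu.const_mul k₁) (hv.const_mul k₂),
    setIntegral_Icc_prod_Icc_comp_fst (fun x => l₁ * f x + l₂ * g x + l₃ * h x) hab hcd,
    intervalIntegral.integral_add hfg (hh.const_mul l₃),
    intervalIntegral.integral_add (hf.const_mul l₁) (hg.const_mul l₂)]
  simp only [integral_const_mul, intervalIntegral.integral_const_mul, smul_eq_mul,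
    intervalIntegral_intervalIntegral_eq_setIntegral_prod hab hcd hu,
    intervalIntegral_intervalIntegral_eq_setIntegral_prod hab hcd hv]

theorem deriv_intervalIntegral_intervalIntegral_of_contDiffOn {f : ℝ × ℝ × ℝ → E} {t₀ t₁ t : ℝ}
    (hab : a < b) (hcd : c < d) (ht : t ∈ Ioo t₀ t₁)
    (hf : ContDiffOn ℝ 1 f (Icc t₀ t₁ ×ˢ (Icc a b ×ˢ Icc c d))) :
    deriv (fun s => ∫ x in a..b, ∫ y in c..d, f (s, x, y)) t
      = ∫ q in Icc a b ×ˢ Icc c d, derivWithin (fun s => f (s, q)) (Icc t₀ t₁) t := by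
  have hrect : UniqueDiffOn ℝ (Icc a b ×ˢ Icc c d) :=
    (uniqueDiffOn_Icc hab).prod (uniqueDiffOn_Icc hcd)
  refine ((hasDerivAt_setIntegral_of_contDiffOn (isCompact_Icc.prod isCompact_Icc) hrect hf
    ht).congr_of_eventuallyEq ?_).deriv
  filter_upwards [Icc_mem_nhds ht.1 ht.2] with s hs
  exact intervalIntegral_intervalIntegral_eq_setIntegral_prod hab.le hcd.le
    ((contDiffOn_comp_prodMk_right hf hs).continuousOn.integrableOn_compact
      (isCompact_Icc.prod isCompact_Icc))

theorem setIntegral_mul_derivWithin_fst {w : ℝ → ℝ} {f : ℝ × ℝ → ℝ} (hab : a < b) (hcd : c < d)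
    (hw : ContinuousOn w (Icc c d)) (hf : ContDiffOn ℝ 1 f (Icc a b ×ˢ Icc c d)) :
    ∫ p in Icc a b ×ˢ Icc c d, w p.2 * derivWithin (fun x => f (x, p.2)) (Icc a b) p.1
      = ∫ y in c..d, w y * (f (b, y) - f (a, y)) := by
  have hf' := continuousOn_derivWithin_comp_prodMk_left hf (uniqueDiffOn_Icc hab)
    (uniqueDiffOn_Icc hcd)
  have hint := ((hw.comp continuousOn_snd fun p hp => hp.2).mul hf').integrableOn_compact
    (μ := volume) (isCompact_Icc.prod isCompact_Icc)
  refine (intervalIntegral_intervalIntegral_swap_eq_setIntegral_prod hab.le hcd.le hint).symm.trans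
    (intervalIntegral.integral_congr fun y hy => ?_)
  rw [uIcc_of_le hcd.le] at hy
  have hfy : ContDiffOn ℝ 1 (fun x => f (x, y)) (Icc a b) :=
    hf.comp (by fun_prop) fun x hx => ⟨hx, hy⟩
  simp only [Function.comp_apply, Pi.mul_apply, intervalIntegral.integral_const_mul,
    intervalIntegral.integral_derivWithin_Icc_of_contDiffOn_Icc hfy hab.le]

end Rectangle

section Slab

variable {t₀ t₁ t xL xR : ℝ}

lemma neg_inflow_le_integral_mul_sub {u v : ℝ → ℝ}
    (hu : IntervalIntegrable u volume (-1) 1) (hv : IntervalIntegrable v volume (-1) 1)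
    (hu₀ : ∀ μ ∈ Icc (-1) 1, 0 ≤ u μ) (hv₀ : ∀ μ ∈ Icc (-1) 1, 0 ≤ v μ) :
    -((∫ μ in 0..1, u μ) + ∫ μ in (-1)..0, v μ) ≤ ∫ μ in (-1)..1, μ * (v μ - u μ) := by
  have hsub_right : uIcc (0 : ℝ) 1 ⊆ uIcc (-1) 1 := by
    simp [uIcc_of_le, Icc_subset_Icc_iff]
  have hsub_left : uIcc (-1 : ℝ) 0 ⊆ uIcc (-1) 1 := by
    simp [uIcc_of_le, Icc_subset_Icc_iff]
  have hflux : IntervalIntegrable (fun μ => μ * (v μ - u μ)) volume (-1) 1 :=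
    (hv.sub hu).continuousOn_mul continuousOn_id
  have hright : -∫ μ in 0..1, u μ ≤ ∫ μ in 0..1, μ * (v μ - u μ) := by
    rw [← intervalIntegral.integral_neg]
    refine intervalIntegral.integral_mono_on zero_le_one (hu.mono_set hsub_right).neg
      (hflux.mono_set hsub_right) fun μ hμ => ?_
    have hμ' : μ ∈ Icc (-1 : ℝ) 1 := ⟨by linarith [hμ.1], hμ.2⟩
    linarith [mul_nonneg hμ.1 (hv₀ μ hμ'), mul_nonneg (sub_nonneg.2 hμ.2) (hu₀ μ hμ')]
  have hleft : -∫ μ in (-1)..0, v μ ≤ ∫ μ in (-1)..0, μ * (v μ - u μ) := by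
    rw [← intervalIntegral.integral_neg]
    refine intervalIntegral.integral_mono_on (by norm_num) (hv.mono_set hsub_left).neg
      (hflux.mono_set hsub_left) fun μ hμ => ?_
    have hμ' : μ ∈ Icc (-1 : ℝ) 1 := ⟨hμ.1, by linarith [hμ.2]⟩
    linarith [mul_nonneg (neg_nonneg.2 hμ.2) (hu₀ μ hμ'),
      mul_nonneg (neg_le_iff_add_nonneg'.1 hμ.1) (hv₀ μ hμ')]
  rw [← intervalIntegral.integral_add_adjacent_intervals (hflux.mono_set hsub_left)
    (hflux.mono_set hsub_right)]
  linarith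

lemma neg_inflow_le_setIntegral_mul_derivWithin {f : ℝ × ℝ → ℝ} (hx : xL < xR)
    (hf : ContDiffOn ℝ 1 f (Icc xL xR ×ˢ Icc (-1) 1))
    (hf₀ : ∀ q ∈ Icc xL xR ×ˢ Icc (-1) 1, 0 ≤ f q) :
    -((∫ μ in 0..1, f (xL, μ)) + ∫ μ in (-1)..0, f (xR, μ))
      ≤ ∫ q in Icc xL xR ×ˢ Icc (-1) 1,
          q.2 * derivWithin (fun x => f (x, q.2)) (Icc xL xR) q.1 := by
  have integrable_trace {x : ℝ} (hx : x ∈ Icc xL xR) :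
      IntervalIntegrable (fun μ => f (x, μ)) volume (-1) 1 :=
    (contDiffOn_comp_prodMk_right hf hx).continuousOn.intervalIntegrable_of_Icc (by norm_num)
  have hxL : xL ∈ Icc xL xR := left_mem_Icc.2 hx.le
  have hxR : xR ∈ Icc xL xR := right_mem_Icc.2 hx.le
  rw [setIntegral_mul_derivWithin_fst (w := fun μ => μ) hx (by norm_num) continuousOn_id hf]
  exact neg_inflow_le_integral_mul_sub (integrable_trace hxL) (integrable_trace hxR)
    (fun μ hμ => hf₀ _ ⟨hxL, hμ⟩) fun μ hμ => hf₀ _ ⟨hxR, hμ⟩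

theorem mul_deriv_integral_le_of_transport_le {f : ℝ × ℝ × ℝ → ℝ} {g : ℝ × ℝ → ℝ} {κ η : ℝ}
    (hη : 0 ≤ η) (hx : xL < xR) (ht : t ∈ Ioo t₀ t₁)
    (hf : ContDiffOn ℝ 1 f (Icc t₀ t₁ ×ˢ (Icc xL xR ×ˢ Icc (-1) 1)))
    (hf₀ : ∀ q ∈ Icc xL xR ×ˢ Icc (-1) 1, 0 ≤ f (t, q))
    (hg : IntegrableOn g (Icc xL xR ×ˢ Icc (-1) 1))
    (hfg : ∀ x ∈ Ioo xL xR, ∀ μ ∈ Ioo (-1) 1,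
      κ * deriv (fun s => f (s, x, μ)) t + η * (μ * deriv (fun y => f (t, y, μ)) x) ≤ g (x, μ)) :
    κ * deriv (fun s => ∫ x in xL..xR, ∫ μ in (-1)..1, f (s, x, μ)) t
      ≤ (∫ q in Icc xL xR ×ˢ Icc (-1) 1, g q)
        + η * ((∫ μ in 0..1, f (t, xL, μ)) + ∫ μ in (-1)..0, f (t, xR, μ)) := by
  have hR : IsCompact (Icc xL xR ×ˢ Icc (-1 : ℝ) 1) := isCompact_Icc.prod isCompact_Icc
  have hμ : UniqueDiffOn ℝ (Icc (-1 : ℝ) 1) := uniqueDiffOn_Icc (by norm_num)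
  have hxd : UniqueDiffOn ℝ (Icc xL xR) := uniqueDiffOn_Icc hx
  have ht' : t ∈ Icc t₀ t₁ := Ioo_subset_Icc_self ht
  have hft := contDiffOn_comp_prodMk_right hf ht'
  have integrable_time : IntegrableOn
      (fun q => derivWithin (fun s => f (s, q)) (Icc t₀ t₁) t) (Icc xL xR ×ˢ Icc (-1) 1) :=
    ((continuousOn_derivWithin_comp_prodMk_left hf (uniqueDiffOn_Icc (ht.1.trans ht.2))
      (hxd.prod hμ)).comp (f := fun q => (t, q)) (by fun_prop)
        fun q hq => ⟨ht', hq⟩).integrableOn_compact hR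
  have integrable_flux : IntegrableOn
      (fun q : ℝ × ℝ => q.2 * derivWithin (fun y => f (t, y, q.2)) (Icc xL xR) q.1)
      (Icc xL xR ×ˢ Icc (-1) 1) :=
    (continuousOn_snd.mul
      (continuousOn_derivWithin_comp_prodMk_left hft hxd hμ)).integrableOn_compact hR
  have integrated := integral_mono_ae ((integrable_time.const_mul κ).add
    (integrable_flux.const_mul η)) hg <| ae_restrict_Icc_prod_Icc_of_forall_mem_Ioo
    fun x hx μ hμ => by
      simpa [derivWithin_of_mem_nhds (Icc_mem_nhds hx.1 hx.2),
        derivWithin_of_mem_nhds (Icc_mem_nhds ht.1 ht.2)] using hfg x hx μ hμ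
  rw [integral_add' (integrable_time.const_mul κ) (integrable_flux.const_mul η),
    integral_const_mul, integral_const_mul] at integrated
  have inflow := mul_le_mul_of_nonneg_left (neg_inflow_le_setIntegral_mul_derivWithin hx hft hf₀) hη
  rw [deriv_intervalIntegral_intervalIntegral_of_contDiffOn hx (by norm_num) ht hf]
  linarith

theorem mul_deriv_integral_sq_le_of_transport_le {u : ℝ × ℝ × ℝ → ℝ} {g : ℝ × ℝ → ℝ} {κ η : ℝ}
    (hη : 0 ≤ η) (hx : xL < xR) (ht : t ∈ Ioo t₀ t₁)
    (hu : ContDiffOn ℝ 1 u (Icc t₀ t₁ ×ˢ (Icc xL xR ×ˢ Icc (-1) 1)))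
    (hg : IntegrableOn g (Icc xL xR ×ˢ Icc (-1) 1))
    (hug : ∀ x ∈ Ioo xL xR, ∀ μ ∈ Ioo (-1) 1,
      κ * (2 * u (t, x, μ) * deriv (fun s => u (s, x, μ)) t)
        + η * (μ * (2 * u (t, x, μ) * deriv (fun y => u (t, y, μ)) x)) ≤ g (x, μ)) :
    κ * deriv (fun s => ∫ x in xL..xR, ∫ μ in (-1)..1, u (s, x, μ) ^ 2) t
      ≤ (∫ q in Icc xL xR ×ˢ Icc (-1) 1, g q)
        + η * ((∫ μ in 0..1, u (t, xL, μ) ^ 2) + ∫ μ in (-1)..0, u (t, xR, μ) ^ 2) := by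
  refine mul_deriv_integral_le_of_transport_le hη hx ht (hu.pow 2) (fun q _ => sq_nonneg _) hg
    fun x hx μ hμ => ?_
  have hx' := Ioo_subset_Icc_self hx
  have hμ' := Ioo_subset_Icc_self hμ
  have hdt := differentiableAt_comp_prodMk_left (hu.differentiableOn one_ne_zero) ht
    (y := (x, μ)) ⟨hx', hμ'⟩
  have hdx := differentiableAt_comp_prodMk_left ((contDiffOn_comp_prodMk_right hu
    (Ioo_subset_Icc_self ht)).differentiableOn one_ne_zero) hx hμ'
  simpa [deriv_fun_pow hdt, deriv_fun_pow hdx] using hug x hx μ hμ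

end Slab

section Pointwise

lemma mul_le_mul_sq_add_sq_div {α : ℝ} (hα : 0 < α) (u v : ℝ) :
    u * v ≤ α * v ^ 2 + u ^ 2 / (4 * α) := by
  have h := two_mul_le_add_mul_sq (a := v) (b := u) (mul_pos two_pos hα)
  have e : (2 * α)⁻¹ * u ^ 2 = 2 * (u ^ 2 / (4 * α)) := by ring
  linarith

lemma sq_pow_sub_pow_le {x y M : ℝ} (n : ℕ) (hx : |x| ≤ M) (hy : |y| ≤ M) :
    (x ^ n - y ^ n) ^ 2 ≤ (n * M ^ (n - 1)) ^ 2 * (x - y) ^ 2 := by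
  have h : |x ^ n - y ^ n| ≤ n * M ^ (n - 1) * |x - y| :=
    calc |x ^ n - y ^ n| ≤ |x - y| * n * max |x| |y| ^ (n - 1) := abs_pow_sub_pow_le x y n
      _ ≤ |x - y| * n * M ^ (n - 1) := by gcongr; exact max_le hx hy
      _ = n * M ^ (n - 1) * |x - y| := by ring
  calc (x ^ n - y ^ n) ^ 2 = |x ^ n - y ^ n| ^ 2 := (sq_abs _).symm
    _ ≤ (n * M ^ (n - 1) * |x - y|) ^ 2 := by gcongr
    _ = (n * M ^ (n - 1)) ^ 2 * (x - y) ^ 2 := by rw [mul_pow, sq_abs]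

variable {a c ε σ₀ σmin σmax Tmax α σ T Tstar : ℝ}

lemma sq_emission_sub_le (hσ : |σ| ≤ σmax) (hT : |T| ≤ Tmax) (hTstar : |Tstar| ≤ Tmax) :
    (σ * a * c / 2 * (T ^ 4 - Tstar ^ 4)) ^ 2
      ≤ (2 * (a * c * σmax * Tmax ^ 3)) ^ 2 * (T - Tstar) ^ 2 :=
  calc (σ * a * c / 2 * (T ^ 4 - Tstar ^ 4)) ^ 2
      = |σ| ^ 2 * (a * c / 2) ^ 2 * (T ^ 4 - Tstar ^ 4) ^ 2 := by rw [sq_abs]; ring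
    _ ≤ σmax ^ 2 * (a * c / 2) ^ 2 * ((4 * Tmax ^ 3) ^ 2 * (T - Tstar) ^ 2) := by
      gcongr
      exact_mod_cast sq_pow_sub_pow_le 4 hT hTstar
    _ = (2 * (a * c * σmax * Tmax ^ 3)) ^ 2 * (T - Tstar) ^ 2 := by ring

lemma transport_sq_le {I It Ix μ r1 r2 r3 : ℝ} (hσ₀ : 0 < σ₀) (hα : 0 < α)
    (hσmin : σmin ≤ σ) (hσmax : |σ| ≤ σmax) (hT : |T| ≤ Tmax) (hTstar : |Tstar| ≤ Tmax)
    (heq : ε ^ 2 / c * It + σ * I + ε * μ * Ix + 1 / 2 * r3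
      - σ * a * c / 2 * (T ^ 4 - Tstar ^ 4) = ε ^ 2 * r1 + ε / √σ₀ * r2) :
    ε ^ 2 / (2 * c) * (2 * I * It) + ε / 2 * (μ * (2 * I * Ix))
      ≤ (4 * α - σmin) * I ^ 2 + ε ^ 2 / (4 * α * σ₀) * r2 ^ 2
        + (ε ^ 4 / (4 * α) * r1 ^ 2 + 1 / (16 * α) * r3 ^ 2
          + (a * c * σmax * Tmax ^ 3) ^ 2 / α * (T - Tstar) ^ 2) := by
  have absorption : σmin * I ^ 2 ≤ σ * I ^ 2 := by gcongr
  have young_r1 : ε ^ 2 * r1 * I ≤ α * I ^ 2 + ε ^ 4 / (4 * α) * r1 ^ 2 :=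
    (mul_le_mul_sq_add_sq_div hα _ _).trans_eq (by ring)
  have young_r2 : ε / √σ₀ * r2 * I ≤ α * I ^ 2 + ε ^ 2 / (4 * α * σ₀) * r2 ^ 2 :=
    (mul_le_mul_sq_add_sq_div hα _ _).trans_eq (by
      rw [mul_pow, div_pow, Real.sq_sqrt hσ₀.le]; ring)
  have young_r3 : -(1 / 2) * r3 * I ≤ α * I ^ 2 + 1 / (16 * α) * r3 ^ 2 :=
    (mul_le_mul_sq_add_sq_div hα _ _).trans_eq (by ring)
  have young_emission : σ * a * c / 2 * (T ^ 4 - Tstar ^ 4) * I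
      ≤ α * I ^ 2 + (a * c * σmax * Tmax ^ 3) ^ 2 / α * (T - Tstar) ^ 2 :=
    calc σ * a * c / 2 * (T ^ 4 - Tstar ^ 4) * I
        ≤ α * I ^ 2 + (σ * a * c / 2 * (T ^ 4 - Tstar ^ 4)) ^ 2 / (4 * α) :=
          mul_le_mul_sq_add_sq_div hα _ _
      _ ≤ α * I ^ 2 + (2 * (a * c * σmax * Tmax ^ 3)) ^ 2 * (T - Tstar) ^ 2 / (4 * α) := by
          gcongr
          exact sq_emission_sub_le hσmax hT hTstar
      _ = α * I ^ 2 + (a * c * σmax * Tmax ^ 3) ^ 2 / α * (T - Tstar) ^ 2 := by ring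
  have tested : ε ^ 2 / (2 * c) * (2 * I * It) + ε / 2 * (μ * (2 * I * Ix))
      = ε ^ 2 * r1 * I + ε / √σ₀ * r2 * I + -(1 / 2) * r3 * I
        + σ * a * c / 2 * (T ^ 4 - Tstar ^ 4) * I - σ * I ^ 2 := by
    linear_combination I * heq
  linarith

end Pointwise

theorem energy_inequality_for_intensity_error_general
    {a c ε σ₀ xL xR t₀ t₁ t σmin σmax Tmax α₁ : ℝ} (_hc : c ≠ 0) (hε : 0 ≤ ε) (hσ₀ : 0 < σ₀)
    (hx : xL < xR) (ht : t ∈ Ioo t₀ t₁) (hα₁ : 0 < α₁)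
    {σ T Tstar r1 r3 r5L r5R : ℝ → ℝ} {r2 : ℝ → ℝ → ℝ} {It : ℝ → ℝ → ℝ → ℝ}
    (hT : IntervalIntegrable (fun x => (T x - Tstar x) ^ 2) volume xL xR)
    (hr1 : IntervalIntegrable (fun x => r1 x ^ 2) volume xL xR)
    (hr3 : IntervalIntegrable (fun x => r3 x ^ 2) volume xL xR)
    (hr2 : IntegrableOn (fun q : ℝ × ℝ => r2 q.1 q.2 ^ 2) (Icc xL xR ×ˢ Icc (-1) 1))
    (hIt : ContDiffOn ℝ 1 (fun p : ℝ × ℝ × ℝ => It p.1 p.2.1 p.2.2)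
      (Icc t₀ t₁ ×ˢ (Icc xL xR ×ˢ Icc (-1) 1)))
    (heq : ∀ x ∈ Ioo xL xR, ∀ μ ∈ Ioo (-1) 1,
      ε ^ 2 / c * deriv (fun s => It s x μ) t + σ x * It t x μ
          + ε * μ * deriv (fun y => It t y μ) x + 1 / 2 * r3 x
          - σ x * a * c / 2 * (T x ^ 4 - Tstar x ^ 4)
        = ε ^ 2 * r1 x + ε / √σ₀ * r2 x μ)
    (hσmin : ∀ x ∈ Ioo xL xR, σmin ≤ σ x) (hσmax : ∀ x ∈ Ioo xL xR, |σ x| ≤ σmax)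
    (hTmax : ∀ x ∈ Ioo xL xR, |T x| ≤ Tmax) (hTstar : ∀ x ∈ Ioo xL xR, |Tstar x| ≤ Tmax)
    (hbL : ∀ μ ∈ Ioo 0 1, It t xL μ = r5L μ) (hbR : ∀ μ ∈ Ioo (-1) 0, It t xR μ = r5R μ) :
    ε ^ 2 / (2 * c) * deriv (fun s => ∫ x in xL..xR, ∫ μ in (-1)..1, It s x μ ^ 2) t
        + σmin * (∫ x in xL..xR, ∫ μ in (-1)..1, It t x μ ^ 2)
      ≤ 4 * α₁ * (∫ x in xL..xR, ∫ μ in (-1)..1, It t x μ ^ 2)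
        + ε ^ 4 / (2 * α₁) * (∫ x in xL..xR, r1 x ^ 2)
        + ε ^ 2 / (4 * α₁ * σ₀) * (∫ x in xL..xR, ∫ μ in (-1)..1, r2 x μ ^ 2)
        + 1 / (8 * α₁) * (∫ x in xL..xR, r3 x ^ 2)
        + 2 * (a * c * σmax * Tmax ^ 3) ^ 2 / α₁ * (∫ x in xL..xR, (T x - Tstar x) ^ 2)
        + ε / 2 * ((∫ μ in 0..1, r5L μ ^ 2) + ∫ μ in (-1)..0, r5R μ ^ 2) := by
  have integrable_It : IntegrableOn (fun q : ℝ × ℝ => It t q.1 q.2 ^ 2)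
      (Icc xL xR ×ˢ Icc (-1) 1) :=
    ((contDiffOn_comp_prodMk_right hIt (Ioo_subset_Icc_self ht)).continuousOn.pow
      2).integrableOn_compact (isCompact_Icc.prod isCompact_Icc)
  have inflow_left : ∫ μ in 0..1, It t xL μ ^ 2 = ∫ μ in 0..1, r5L μ ^ 2 :=
    intervalIntegral.integral_congr_Ioo_of_le zero_le_one fun μ hμ => by simp only [hbL μ hμ]
  have inflow_right : ∫ μ in (-1)..0, It t xR μ ^ 2 = ∫ μ in (-1)..0, r5R μ ^ 2 :=
    intervalIntegral.integral_congr_Ioo_of_le (by norm_num) fun μ hμ => by simp only [hbR μ hμ]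
  have integrable_bound := ((integrable_It.const_mul (4 * α₁ - σmin)).add
    (hr2.const_mul (ε ^ 2 / (4 * α₁ * σ₀)))).add (integrableOn_Icc_prod_Icc_comp_fst hx.le
      (((hr1.const_mul (ε ^ 4 / (4 * α₁))).add (hr3.const_mul (1 / (16 * α₁)))).add
        (hT.const_mul ((a * c * σmax * Tmax ^ 3) ^ 2 / α₁))))
  have energy_le := mul_deriv_integral_sq_le_of_transport_le (by positivity : 0 ≤ ε / 2) hx ht hIt
    integrable_bound fun x hx μ hμ => transport_sq_le hσ₀ hα₁ (hσmin x hx) (hσmax x hx)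
      (hTmax x hx) (hTstar x hx) (heq x hx μ hμ)
  have bound_integral := setIntegral_Icc_prod_Icc_linear_combination hx.le (by norm_num)
    integrable_It hr2 hr1 hr3 hT (4 * α₁ - σmin) (ε ^ 2 / (4 * α₁ * σ₀)) (ε ^ 4 / (4 * α₁))
    (1 / (16 * α₁)) ((a * c * σmax * Tmax ^ 3) ^ 2 / α₁)
  simp only [Pi.add_apply, bound_integral, inflow_left, inflow_right] at energy_le
  linear_combination energy_le

lemma intervalIntegrable_sq_slice {f : ℝ → ℝ → ℝ} {s : Set ℝ} {a b t : ℝ} (hab : a ≤ b)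
    (hf : ContinuousOn (fun p : ℝ × ℝ => f p.1 p.2) (s ×ˢ Icc a b)) (ht : t ∈ s) :
    IntervalIntegrable (fun x => f t x ^ 2) volume a b :=
  ((hf.uncurry_left t ht).pow 2).intervalIntegrable_of_Icc hab

end

/-- The differential energy inequality for the intensity error `Ĩ` in the convergence
analysis: it follows from the energy identity by dropping the nonnegative outflow
boundary terms, bounding the inflow boundary terms, using the quartic factorization
bound, the opacity bounds, and Young's inequality with parameter `α₁ > 0`. -/
theorem energy_inequality_for_intensity_error
    (a c ε σ₀ : ℝ) (ha : 0 < a) (hc : 0 < c) (hε : 0 < ε) (hσ₀ : 0 < σ₀)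
    (xL xR : ℝ) (hx : xL < xR) (tf : ℝ) (htf : 0 < tf)
    (σmin σmax Tmin Tmax : ℝ) (hσmin : 0 < σmin) (hTmin : 0 < Tmin)
    (σ T Tstar r1 r3 : ℝ → ℝ → ℝ) (r2 It : ℝ → ℝ → ℝ → ℝ) (r5L r5R : ℝ → ℝ → ℝ)
    (hσ : ContinuousOn (fun p : ℝ × ℝ => σ p.1 p.2)
      (Set.Icc (0 : ℝ) tf ×ˢ Set.Icc xL xR))
    (hT : ContinuousOn (fun p : ℝ × ℝ => T p.1 p.2)
      (Set.Icc (0 : ℝ) tf ×ˢ Set.Icc xL xR))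
    (hTstar : ContinuousOn (fun p : ℝ × ℝ => Tstar p.1 p.2)
      (Set.Icc (0 : ℝ) tf ×ˢ Set.Icc xL xR))
    (hr1 : ContinuousOn (fun p : ℝ × ℝ => r1 p.1 p.2)
      (Set.Icc (0 : ℝ) tf ×ˢ Set.Icc xL xR))
    (hr3 : ContinuousOn (fun p : ℝ × ℝ => r3 p.1 p.2)
      (Set.Icc (0 : ℝ) tf ×ˢ Set.Icc xL xR))
    (hr2 : ContinuousOn (fun p : ℝ × ℝ × ℝ => r2 p.1 p.2.1 p.2.2)
      (Set.Icc (0 : ℝ) tf ×ˢ (Set.Icc xL xR ×ˢ Set.Icc (-1 : ℝ) 1)))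
    (hIt : ContDiffOn ℝ 1 (fun p : ℝ × ℝ × ℝ => It p.1 p.2.1 p.2.2)
      (Set.Icc (0 : ℝ) tf ×ˢ (Set.Icc xL xR ×ˢ Set.Icc (-1 : ℝ) 1)))
    (heq : ∀ t ∈ Set.Ioo (0 : ℝ) tf, ∀ x ∈ Set.Ioo xL xR, ∀ μ ∈ Set.Ioo (-1 : ℝ) 1,
      (ε ^ 2 / c) * deriv (fun s => It s x μ) t + σ t x * It t x μ
          + ε * μ * deriv (fun y => It t y μ) x + (1 / 2) * r3 t x
          - (σ t x * a * c / 2) * ((T t x) ^ 4 - (Tstar t x) ^ 4)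
        = ε ^ 2 * r1 t x + (ε / Real.sqrt σ₀) * r2 t x μ)
    (hσbd : ∀ t ∈ Set.Icc (0 : ℝ) tf, ∀ x ∈ Set.Icc xL xR,
      σmin ≤ σ t x ∧ σ t x ≤ σmax)
    (hTbd : ∀ t ∈ Set.Icc (0 : ℝ) tf, ∀ x ∈ Set.Icc xL xR,
      Tmin ≤ T t x ∧ T t x ≤ Tmax ∧ Tmin ≤ Tstar t x ∧ Tstar t x ≤ Tmax)
    (hbL : ∀ t ∈ Set.Ioo (0 : ℝ) tf, ∀ μ ∈ Set.Ioo (0 : ℝ) 1, It t xL μ = r5L t μ)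
    (hbR : ∀ t ∈ Set.Ioo (0 : ℝ) tf, ∀ μ ∈ Set.Ioo (-1 : ℝ) 0, It t xR μ = r5R t μ) :
    ∀ α₁ > (0 : ℝ), ∀ t ∈ Set.Ioo (0 : ℝ) tf,
      (ε ^ 2 / (2 * c)) *
          deriv (fun s => ∫ x in xL..xR, ∫ μ in (-1 : ℝ)..1, (It s x μ) ^ 2) t
        + σmin * (∫ x in xL..xR, ∫ μ in (-1 : ℝ)..1, (It t x μ) ^ 2)
      ≤ 4 * α₁ * (∫ x in xL..xR, ∫ μ in (-1 : ℝ)..1, (It t x μ) ^ 2)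
        + (ε ^ 4 / (2 * α₁)) * (∫ x in xL..xR, (r1 t x) ^ 2)
        + (ε ^ 2 / (4 * α₁ * σ₀)) * (∫ x in xL..xR, ∫ μ in (-1 : ℝ)..1, (r2 t x μ) ^ 2)
        + (1 / (8 * α₁)) * (∫ x in xL..xR, (r3 t x) ^ 2)
        + (2 * (a * c * σmax * Tmax ^ 3) ^ 2 / α₁) *
            (∫ x in xL..xR, (T t x - Tstar t x) ^ 2)
        + (ε / 2) * ((∫ μ in (0 : ℝ)..1, (r5L t μ) ^ 2)
            + (∫ μ in (-1 : ℝ)..0, (r5R t μ) ^ 2)) := by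
  intro α₁ hα₁ t ht
  have ht' := Set.Ioo_subset_Icc_self ht
  have abs_le_of_pos {m y M : ℝ} (hm : 0 < m) (hmy : m ≤ y) (hyM : y ≤ M) : |y| ≤ M :=
    (abs_of_pos (hm.trans_le hmy)).trans_le hyM
  have hσt x hx := hσbd t ht' x (Set.Ioo_subset_Icc_self hx)
  have hTt x hx := hTbd t ht' x (Set.Ioo_subset_Icc_self hx)
  have hr2t : ContinuousOn (fun q : ℝ × ℝ => r2 t q.1 q.2) (Set.Icc xL xR ×ˢ Set.Icc (-1) 1) :=
    hr2.uncurry_left (f := fun s (q : ℝ × ℝ) => r2 s q.1 q.2) t ht'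
  exact energy_inequality_for_intensity_error_general hc.ne' hε.le hσ₀ hx ht hα₁
    (intervalIntegrable_sq_slice (f := fun s x => T s x - Tstar s x) hx.le (hT.sub hTstar) ht')
    (intervalIntegrable_sq_slice hx.le hr1 ht') (intervalIntegrable_sq_slice hx.le hr3 ht')
    ((hr2t.pow 2).integrableOn_compact (isCompact_Icc.prod isCompact_Icc)) hIt (heq t ht)
    (fun x hx => (hσt x hx).1) (fun x hx => abs_le_of_pos hσmin (hσt x hx).1 (hσt x hx).2)
    (fun x hx => abs_le_of_pos hTmin (hTt x hx).1 (hTt x hx).2.1)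
    (fun x hx => abs_le_of_pos hTmin (hTt x hx).2.2.1 (hTt x hx).2.2.2) (hbL t ht) (hbR t ht)
end

section
/- Let a, c, C_v, ε, σ₀ > 0 be constants, x_L < x_R, t_f > 0. Let σ, T, T*, r₃, r₄ : [0,t_f] × [x_L,x_R] → ℝ be continuous with 0 < σ_min ≤ σ ≤ σ_max and 0 < T_min ≤ T, T* ≤ T_max, let T̃ = T − T* be continuously differentiable, let Ĩ : [0,t_f] × [x_L,x_R] × [−1,1] → ℝ be continuous, and set ρ̃(t,x) = ⟨Ĩ(t,x,·)⟩ − (ε/√σ₀)·r₄(t,x). Suppose ε² C_v ∂_t T̃ − 2σ ρ̃ + σ a c (T⁴ − T*⁴) = r₃ pointwise on (0,t_f) × (x_L,x_R). Then for every α₂ > 0 and every t ∈ (0,t_f): (ε² C_v/2)·(d/dt)‖T̃(t)‖²_x + 4 a c σ_min T_min³·‖T̃(t)‖²_x ≤ 3α₂·‖T̃(t)‖²_x + (1/(4α₂))·‖r₃(t)‖²_x + (σ_max²/(2α₂))·‖Ĩ(t)‖² + (ε² σ_max²/(α₂ σ₀))·‖r₄(t)‖²_x, where ‖·‖_x denotes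 the L² norm over (x_L,x_R) and ‖·‖ the L² norm over (x_L,x_R) × (−1,1). -/
open MeasureTheory

/-!
Multiplying the temperature-error equation by `T̃` gives, at each `x`, an inequality between
densities: monotonicity of `T ↦ T⁴` produces the damping term, and Young's inequality splits each
product of `T̃` with `r₃`, `2σ⟨Ĩ⟩` and `2σ(ε/√σ₀)r₄` into `α₂ T̃²` plus a source, the angular
average being controlled by Jensen's inequality. Integrating in `x` and using
`(d/dt)‖T̃‖² = 2 ∫ T̃ ∂ₜT̃` gives the result.
-/

open Set Topology

section Algebra

lemma mul_le_mul_sq_add_div_mul_sq {K : Type*} [Field K] [LinearOrder K] [IsStrictOrderedRing K]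
    {α : K} (hα : 0 < α) (u v : K) : u * v ≤ α * u ^ 2 + 1 / (4 * α) * v ^ 2 := by
  have young : 2 * u * v ≤ 2 * α * u ^ 2 + (2 * α)⁻¹ * v ^ 2 :=
    two_mul_le_add_mul_sq (by positivity)
  have coeff : (2 * α)⁻¹ = 2 * (1 / (4 * α)) := by field_simp; norm_num
  rw [coeff] at young
  linarith

lemma natCast_mul_pow_pred_mul_sub_sq_le {R : Type*} [CommRing R] [LinearOrder R]
    [IsStrictOrderedRing R] {m x y : R} (hm : 0 ≤ m) (hx : m ≤ x) (hy : m ≤ y) (n : ℕ) :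
    n * m ^ (n - 1) * (x - y) ^ 2 ≤ (x - y) * (x ^ n - y ^ n) := by
  have geom_sum_ge : n * m ^ (n - 1) ≤ ∑ i ∈ Finset.range n, x ^ i * y ^ (n - 1 - i) := by
    suffices ∀ i ∈ Finset.range n, m ^ (n - 1) ≤ x ^ i * y ^ (n - 1 - i) by
      simpa using Finset.card_nsmul_le_sum _ _ _ this
    intro i hi
    have exponents : i + (n - 1 - i) = n - 1 := by grind
    calc m ^ (n - 1) = m ^ i * m ^ (n - 1 - i) := by rw [← pow_add, exponents]
      _ ≤ x ^ i * y ^ (n - 1 - i) :=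
        mul_le_mul (by gcongr) (by gcongr) (by positivity) (pow_nonneg (hm.trans hx) i)
  calc n * m ^ (n - 1) * (x - y) ^ 2
      ≤ (∑ i ∈ Finset.range n, x ^ i * y ^ (n - 1 - i)) * (x - y) ^ 2 := by gcongr
    _ = (x - y) * (x ^ n - y ^ n) := by rw [← (Commute.all x y).geom_sum₂_mul n]; ring

end Algebra

section Jensen

lemma sq_intervalAverage_le {f : ℝ → ℝ} {a b : ℝ} (hab : a ≠ b)
    (hf : IntervalIntegrable f volume a b)
    (hf_sq : IntervalIntegrable (fun x => f x ^ 2) volume a b) :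
    (⨍ x in a..b, f x) ^ 2 ≤ ⨍ x in a..b, f x ^ 2 := by
  refine even_two.convexOn_pow.map_set_average_le (continuous_pow 2).continuousOn isClosed_univ
    ?_ ?_ (by simp) hf.def' hf_sq.def'
  · simpa [uIoc] using fun h => h.lt_of_ne' hab
  · simp [uIoc]

lemma avg_eq_intervalAverage (h : ℝ → ℝ) : avg h = ⨍ μ in (-1 : ℝ)..1, h μ := by
  rw [avg, interval_average_eq, smul_eq_mul]
  norm_num

lemma sq_avg_le {h : ℝ → ℝ} (hh : MemLp h 2 (volume.restrict (Ioo (-1) 1))) :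
    avg h ^ 2 ≤ 1 / 2 * ∫ μ in (-1 : ℝ)..1, h μ ^ 2 := by
  have le : (-1 : ℝ) ≤ 1 := by norm_num
  have jensen := sq_intervalAverage_le (by norm_num)
    ((intervalIntegrable_iff_integrableOn_Ioo_of_le le).2 (hh.integrable one_le_two))
    ((intervalIntegrable_iff_integrableOn_Ioo_of_le le).2 hh.integrable_sq)
  rwa [← avg_eq_intervalAverage, ← avg_eq_intervalAverage] at jensen

end Jensen

section DifferentiationUnderIntegral

variable {E : Type*} [NormedAddCommGroup E] [NormedSpace ℝ E]

lemma hasDerivAt_integral_of_continuousOn_deriv {f f' : ℝ → ℝ → E} {U : Set ℝ} {a b t : ℝ}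
    (hU : U ∈ 𝓝 t) (hf : ∀ s ∈ U, ContinuousOn (f s) (uIcc a b))
    (hf' : ContinuousOn (fun p : ℝ × ℝ => f' p.1 p.2) (U ×ˢ uIcc a b))
    (hderiv : ∀ s ∈ U, ∀ x ∈ uIcc a b, HasDerivAt (fun r => f r x) (f' s x) s) :
    HasDerivAt (fun s => ∫ x in a..b, f s x) (∫ x in a..b, f' t x) t := by
  obtain ⟨V, hV, hVU, hVc⟩ := local_compact_nhds hU
  have ht : t ∈ U := mem_of_mem_nhds hU
  obtain ⟨C, hC⟩ := (hVc.prod isCompact_uIcc).exists_bound_of_continuousOn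
    (hf'.mono (prod_mono_left hVU))
  have hf't : ContinuousOn (f' t) (uIcc a b) := hf'.uncurry_left (f := f') t ht
  refine (intervalIntegral.hasDerivAt_integral_of_dominated_loc_of_deriv_le
    (bound := fun _ => C) hV ?_ (hf t ht).intervalIntegrable
    hf't.intervalIntegrable.aestronglyMeasurable_restrict_uIoc ?_ (by simp) ?_).2
  · filter_upwards [hU] with s hs
    exact (hf s hs).intervalIntegrable.aestronglyMeasurable_restrict_uIoc
  · exact .of_forall fun x hx s hs => hC (s, x) ⟨hs, uIoc_subset_uIcc hx⟩
  · exact .of_forall fun x hx s hs => hderiv s (hVU hs) x (uIoc_subset_uIcc hx)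

variable {X : Type*} [NormedAddCommGroup X] [NormedSpace ℝ X] {U : Set ℝ} {K : Set X}

lemma hasDerivAt_fst_of_differentiableOn_prod {f : ℝ → X → E} {t : ℝ} {x : X}
    (hf : DifferentiableOn ℝ (fun p : ℝ × X => f p.1 p.2) (U ×ˢ K)) (hU : U ∈ 𝓝 t) (hx : x ∈ K) :
    HasDerivAt (fun s => f s x)
      (fderivWithin ℝ (fun p : ℝ × X => f p.1 p.2) (U ×ˢ K) (t, x) (1, 0)) t := by
  have inclusion : HasDerivWithinAt (fun s : ℝ => (s, x)) (1, 0) U t :=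
    ((hasDerivAt_id t).prodMk (hasDerivAt_const t x)).hasDerivWithinAt
  have mapsTo : MapsTo (fun s : ℝ => (s, x)) U (U ×ˢ K) := fun s hs => ⟨hs, hx⟩
  exact ((hf (t, x) (mapsTo (mem_of_mem_nhds hU))).hasFDerivWithinAt.comp_hasDerivWithinAt
    t inclusion mapsTo).hasDerivAt hU

lemma continuousOn_deriv_fst_of_contDiffOn_prod {f : ℝ → X → E}
    (hf : ContDiffOn ℝ 1 (fun p : ℝ × X => f p.1 p.2) (U ×ˢ K)) (hU : IsOpen U)
    (hK : UniqueDiffOn ℝ K) :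
    ContinuousOn (fun p : ℝ × X => deriv (fun s => f s p.2) p.1) (U ×ˢ K) := by
  refine ((hf.continuousOn_fderivWithin (hU.uniqueDiffOn.prod hK) le_rfl).clm_apply
    (continuousOn_const (c := (1, 0)))).congr fun p hp => ?_
  exact (hasDerivAt_fst_of_differentiableOn_prod (hf.differentiableOn one_ne_zero)
    (hU.mem_nhds hp.1) hp.2).deriv

lemma hasDerivAt_integral_of_contDiffOn_prod {f : ℝ → ℝ → E} {a b t : ℝ} (hab : a < b)
    (hU : IsOpen U) (ht : t ∈ U)
    (hf : ContDiffOn ℝ 1 (fun p : ℝ × ℝ => f p.1 p.2) (U ×ˢ Icc a b)) :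
    HasDerivAt (fun s => ∫ x in a..b, f s x) (∫ x in a..b, deriv (fun s => f s x) t) t := by
  rw [← uIcc_of_le hab.le] at hf
  have uniqueDiff : UniqueDiffOn ℝ (uIcc a b) := uIcc_of_le hab.le ▸ uniqueDiffOn_Icc hab
  exact hasDerivAt_integral_of_continuousOn_deriv (hU.mem_nhds ht)
    (fun s hs => hf.continuousOn.uncurry_left (f := f) s hs)
    (continuousOn_deriv_fst_of_contDiffOn_prod hf hU uniqueDiff)
    fun s hs x hx => (hasDerivAt_fst_of_differentiableOn_prod (hf.differentiableOn one_ne_zero)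
      (hU.mem_nhds hs) hx).differentiableAt.hasDerivAt

lemma hasDerivAt_integral_sq_of_contDiffOn_prod {f : ℝ → ℝ → ℝ} {a b t : ℝ} (hab : a < b)
    (hU : IsOpen U) (ht : t ∈ U)
    (hf : ContDiffOn ℝ 1 (fun p : ℝ × ℝ => f p.1 p.2) (U ×ˢ Icc a b)) :
    HasDerivAt (fun s => ∫ x in a..b, f s x ^ 2)
      (2 * ∫ x in a..b, f t x * deriv (fun s => f s x) t) t := by
  refine (hasDerivAt_integral_of_contDiffOn_prod hab hU ht (hf.pow 2)).congr_deriv ?_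
  rw [← intervalIntegral.integral_const_mul]
  refine intervalIntegral.integral_congr fun x hx => ?_
  rw [uIcc_of_le hab.le] at hx
  have differentiable := (hasDerivAt_fst_of_differentiableOn_prod
    (hf.differentiableOn one_ne_zero) (hU.mem_nhds ht) hx).differentiableAt
  simp only [deriv_fun_pow differentiable, Nat.cast_ofNat, Nat.add_one_sub_one, pow_one, mul_assoc]

end DifferentiationUnderIntegral

section SquareIntegrability

lemma memLp_restrict_of_continuousOn_isCompact {X E : Type*} [TopologicalSpace X] [T2Space X]
    [MeasurableSpace X] [BorelSpace X] [NormedAddCommGroup E]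
    [SecondCountableTopologyEither X E] {μ : Measure X} [IsFiniteMeasureOnCompacts μ]
    {f : X → E} {s K : Set X} (hK : IsCompact K) (hf : ContinuousOn f K) (hs : s ⊆ K)
    (p : ENNReal) : MemLp f p (μ.restrict s) := by
  have : IsFiniteMeasure (μ.restrict K) := ⟨by simpa using hK.measure_lt_top⟩
  obtain ⟨C, hC⟩ := hK.exists_bound_of_continuousOn hf
  exact (MemLp.of_bound (hf.aestronglyMeasurable hK.measurableSet) C
    (ae_restrict_of_forall_mem hK.measurableSet hC)).mono_measure (Measure.restrict_mono hs le_rfl)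

lemma memLp_restrict_of_continuousOn_prod {X Y E : Type*} [TopologicalSpace X]
    [TopologicalSpace Y] [T2Space Y] [MeasurableSpace Y] [BorelSpace Y] [NormedAddCommGroup E]
    [SecondCountableTopologyEither Y E] {μ : Measure Y} [IsFiniteMeasureOnCompacts μ]
    {f : X → Y → E} {A : Set X} {s K : Set Y} {x : X} (hx : x ∈ A) (hK : IsCompact K)
    (hf : ContinuousOn (fun p : X × Y => f p.1 p.2) (A ×ˢ K)) (hs : s ⊆ K) (p : ENNReal) :
    MemLp (f x) p (μ.restrict s) :=
  memLp_restrict_of_continuousOn_isCompact hK (hf.uncurry_left (f := f) x hx) hs p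

lemma ae_memLp_two_prodMk_left {X Y E : Type*} [MeasurableSpace X] [MeasurableSpace Y]
    [NormedAddCommGroup E] {μ : Measure X} {ν : Measure Y} [SFinite μ] [SFinite ν]
    {f : X × Y → E} (hf : MemLp f 2 (μ.prod ν)) : ∀ᵐ x ∂μ, MemLp (fun y => f (x, y)) 2 ν := by
  have integrable_sq := (memLp_two_iff_integrable_sq_norm hf.aestronglyMeasurable).1 hf
  filter_upwards [hf.aestronglyMeasurable.prodMk_left, integrable_sq.prod_right_ae] with x hmeas hsq
  exact (memLp_two_iff_integrable_sq_norm hmeas).2 hsq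

lemma intervalIntegrable_integral_of_integrableOn_prod {E : Type*} [NormedAddCommGroup E]
    [NormedSpace ℝ E] {f : ℝ × ℝ → E} {a b a' b' : ℝ} (hab : a ≤ b) (hab' : a' ≤ b')
    (hf : IntegrableOn f (Ioo a b ×ˢ Ioo a' b')) :
    IntervalIntegrable (fun x => ∫ y in a'..b', f (x, y)) volume a b := by
  rw [IntegrableOn, Measure.volume_eq_prod, ← Measure.prod_restrict] at hf
  refine (intervalIntegrable_iff_integrableOn_Ioo_of_le hab).2 ?_
  simp only [intervalIntegral.integral_of_le hab', integral_Ioc_eq_integral_Ioo]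
  exact hf.integral_prod_left

end SquareIntegrability

section EnergyDensity

variable {a c ε κ σ₀ σmin σmax Tmin α : ℝ}

lemma damping_le_reaction_mul_sub {σ T S : ℝ} (ha : 0 ≤ a) (hc : 0 ≤ c) (hσmin : 0 ≤ σmin)
    (hTmin : 0 ≤ Tmin) (hσ : σmin ≤ σ) (hT : Tmin ≤ T) (hS : Tmin ≤ S) :
    4 * a * c * σmin * Tmin ^ 3 * (T - S) ^ 2 ≤ σ * a * c * ((T - S) * (T ^ 4 - S ^ 4)) := by
  have quartic : 4 * Tmin ^ 3 * (T - S) ^ 2 ≤ (T - S) * (T ^ 4 - S ^ 4) := by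
    simpa using natCast_mul_pow_pred_mul_sub_sq_le hTmin hT hS 4
  calc 4 * a * c * σmin * Tmin ^ 3 * (T - S) ^ 2
      = σmin * a * c * (4 * Tmin ^ 3 * (T - S) ^ 2) := by ring
    _ ≤ σ * a * c * ((T - S) * (T ^ 4 - S ^ 4)) := by
      have := hσmin.trans hσ
      gcongr

lemma mul_two_mul_mul_le_of_sq_le {σ u w B : ℝ} (hα : 0 < α) (hσ : 0 ≤ σ) (hσmax : σ ≤ σmax)
    (hw : w ^ 2 ≤ B) : u * (2 * σ * w) ≤ α * u ^ 2 + σmax ^ 2 / α * B :=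
  calc u * (2 * σ * w) ≤ α * u ^ 2 + 1 / (4 * α) * (2 * σ * w) ^ 2 :=
      mul_le_mul_sq_add_div_mul_sq hα _ _
    _ = α * u ^ 2 + σ ^ 2 / α * w ^ 2 := by field_simp; ring
    _ ≤ α * u ^ 2 + σmax ^ 2 / α * B := by gcongr

lemma energy_density_le {σ T S A J D r₃ r₄ : ℝ} (ha : 0 ≤ a) (hc : 0 ≤ c) (hσ₀ : 0 < σ₀)
    (hσmin : 0 ≤ σmin) (hTmin : 0 ≤ Tmin) (hα : 0 < α) (hσ : σmin ≤ σ) (hσmax : σ ≤ σmax)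
    (hT : Tmin ≤ T) (hS : Tmin ≤ S) (hA : A ^ 2 ≤ 1 / 2 * J)
    (heq : κ * D - 2 * σ * (A - ε / √σ₀ * r₄) + σ * a * c * (T ^ 4 - S ^ 4) = r₃) :
    κ * ((T - S) * D) + 4 * a * c * σmin * Tmin ^ 3 * (T - S) ^ 2
      ≤ 3 * α * (T - S) ^ 2 + 1 / (4 * α) * r₃ ^ 2 + σmax ^ 2 / (2 * α) * J
        + ε ^ 2 * σmax ^ 2 / (α * σ₀) * r₄ ^ 2 := by
  have hσ_nonneg : 0 ≤ σ := hσmin.trans hσ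
  have hr₄ : (-(ε / √σ₀ * r₄)) ^ 2 ≤ ε ^ 2 / σ₀ * r₄ ^ 2 := by
    rw [neg_sq, mul_pow, div_pow, Real.sq_sqrt hσ₀.le]
  have damping := damping_le_reaction_mul_sub ha hc hσmin hTmin hσ hT hS
  have young_r₃ := mul_le_mul_sq_add_div_mul_sq hα (T - S) r₃
  have young_A := mul_two_mul_mul_le_of_sq_le (u := T - S) hα hσ_nonneg hσmax hA
  have young_r₄ := mul_two_mul_mul_le_of_sq_le (u := T - S) hα hσ_nonneg hσmax hr₄
  calc κ * ((T - S) * D) + 4 * a * c * σmin * Tmin ^ 3 * (T - S) ^ 2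
      ≤ κ * ((T - S) * D) + σ * a * c * ((T - S) * (T ^ 4 - S ^ 4)) := by gcongr
    _ = (T - S) * r₃ + (T - S) * (2 * σ * A) + (T - S) * (2 * σ * -(ε / √σ₀ * r₄)) := by
      rw [← heq]; ring
    _ ≤ (α * (T - S) ^ 2 + 1 / (4 * α) * r₃ ^ 2)
        + (α * (T - S) ^ 2 + σmax ^ 2 / α * (1 / 2 * J))
        + (α * (T - S) ^ 2 + σmax ^ 2 / α * (ε ^ 2 / σ₀ * r₄ ^ 2)) := by gcongr
    _ = _ := by field_simp; ring

variable {xL xR : ℝ} {σ T S u D r₃ r₄ : ℝ → ℝ} {I : ℝ → ℝ → ℝ}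

lemma ae_energy_density_le (ha : 0 ≤ a) (hc : 0 ≤ c) (hσ₀ : 0 < σ₀) (hσmin : 0 ≤ σmin)
    (hTmin : 0 ≤ Tmin) (hα : 0 < α)
    (hI : MemLp (fun p : ℝ × ℝ => I p.1 p.2) 2 (volume.restrict (Ioo xL xR ×ˢ Ioo (-1) 1)))
    (hσ : ∀ x ∈ Ioo xL xR, σmin ≤ σ x ∧ σ x ≤ σmax)
    (hT : ∀ x ∈ Ioo xL xR, Tmin ≤ T x) (hS : ∀ x ∈ Ioo xL xR, Tmin ≤ S x)
    (hu : ∀ x ∈ Ioo xL xR, u x = T x - S x)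
    (heq : ∀ x ∈ Ioo xL xR, κ * D x - 2 * σ x * (avg (I x) - ε / √σ₀ * r₄ x)
      + σ x * a * c * (T x ^ 4 - S x ^ 4) = r₃ x) :
    ∀ᵐ x ∂volume.restrict (Ioo xL xR),
      κ * (u x * D x) + 4 * a * c * σmin * Tmin ^ 3 * u x ^ 2
        ≤ 3 * α * u x ^ 2 + 1 / (4 * α) * r₃ x ^ 2
          + σmax ^ 2 / (2 * α) * (∫ μ in (-1 : ℝ)..1, I x μ ^ 2)
          + ε ^ 2 * σmax ^ 2 / (α * σ₀) * r₄ x ^ 2 := by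
  rw [Measure.volume_eq_prod, ← Measure.prod_restrict] at hI
  filter_upwards [ae_memLp_two_prodMk_left hI, ae_restrict_mem measurableSet_Ioo] with x hIx hx
  rw [hu x hx]
  exact energy_density_le ha hc hσ₀ hσmin hTmin hα (hσ x hx).1 (hσ x hx).2 (hT x hx) (hS x hx)
    (sq_avg_le hIx) (heq x hx)

lemma integral_energy_density_le (hx : xL ≤ xR) (ha : 0 ≤ a) (hc : 0 ≤ c) (hσ₀ : 0 < σ₀)
    (hσmin : 0 ≤ σmin) (hTmin : 0 ≤ Tmin) (hα : 0 < α)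
    (hu_mem : MemLp u 2 (volume.restrict (Ioo xL xR)))
    (hD : MemLp D 2 (volume.restrict (Ioo xL xR)))
    (hr₃ : MemLp r₃ 2 (volume.restrict (Ioo xL xR)))
    (hr₄ : MemLp r₄ 2 (volume.restrict (Ioo xL xR)))
    (hI : MemLp (fun p : ℝ × ℝ => I p.1 p.2) 2 (volume.restrict (Ioo xL xR ×ˢ Ioo (-1) 1)))
    (hσ : ∀ x ∈ Ioo xL xR, σmin ≤ σ x ∧ σ x ≤ σmax)
    (hT : ∀ x ∈ Ioo xL xR, Tmin ≤ T x) (hS : ∀ x ∈ Ioo xL xR, Tmin ≤ S x)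
    (hu : ∀ x ∈ Ioo xL xR, u x = T x - S x)
    (heq : ∀ x ∈ Ioo xL xR, κ * D x - 2 * σ x * (avg (I x) - ε / √σ₀ * r₄ x)
      + σ x * a * c * (T x ^ 4 - S x ^ 4) = r₃ x) :
    κ * (∫ x in xL..xR, u x * D x) + 4 * a * c * σmin * Tmin ^ 3 * (∫ x in xL..xR, u x ^ 2)
      ≤ 3 * α * (∫ x in xL..xR, u x ^ 2) + 1 / (4 * α) * (∫ x in xL..xR, r₃ x ^ 2)
        + σmax ^ 2 / (2 * α) * (∫ x in xL..xR, ∫ μ in (-1 : ℝ)..1, I x μ ^ 2)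
        + ε ^ 2 * σmax ^ 2 / (α * σ₀) * (∫ x in xL..xR, r₄ x ^ 2) := by
  have intervalIntegrable {f : ℝ → ℝ} (hf : IntegrableOn f (Ioo xL xR)) :
      IntervalIntegrable f volume xL xR :=
    (intervalIntegrable_iff_integrableOn_Ioo_of_le hx).2 hf
  have int_uD := (intervalIntegrable (hu_mem.integrable_mul hD)).const_mul κ
  have int_u (k : ℝ) := (intervalIntegrable hu_mem.integrable_sq).const_mul k
  have int_r₃ := (intervalIntegrable hr₃.integrable_sq).const_mul (1 / (4 * α))
  have int_r₄ :=
    (intervalIntegrable hr₄.integrable_sq).const_mul (ε ^ 2 * σmax ^ 2 / (α * σ₀))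
  have int_I := (intervalIntegrable_integral_of_integrableOn_prod hx (by norm_num)
    hI.integrable_sq).const_mul (σmax ^ 2 / (2 * α))
  have density_le := ae_energy_density_le ha hc hσ₀ hσmin hTmin hα hI hσ hT hS hu heq
  rw [Measure.restrict_congr_set Ioo_ae_eq_Icc] at density_le
  have integrated := intervalIntegral.integral_mono_ae_restrict hx (int_uD.add (int_u _))
    ((((int_u _).add int_r₃).add int_I).add int_r₄) density_le
  rwa [intervalIntegral.integral_add int_uD (int_u _),
    intervalIntegral.integral_add (((int_u _).add int_r₃).add int_I) int_r₄,
    intervalIntegral.integral_add ((int_u _).add int_r₃) int_I,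
    intervalIntegral.integral_add (int_u _) int_r₃,
    intervalIntegral.integral_const_mul, intervalIntegral.integral_const_mul,
    intervalIntegral.integral_const_mul, intervalIntegral.integral_const_mul,
    intervalIntegral.integral_const_mul, intervalIntegral.integral_const_mul] at integrated

end EnergyDensity

/-- All data other than `Tt` are taken at the single time `t`. -/
theorem energy_inequality_for_temperature_error_general
    {a c Cv ε σ₀ xL xR σmin σmax Tmin α₂ t : ℝ} {U : Set ℝ} {σ T Tstar r3 r4 ρt : ℝ → ℝ}
    {Tt It : ℝ → ℝ → ℝ} (ha : 0 ≤ a) (hc : 0 ≤ c) (hσ₀ : 0 < σ₀) (hx : xL < xR)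
    (hσmin : 0 ≤ σmin) (hTmin : 0 ≤ Tmin) (hα₂ : 0 < α₂) (hU : IsOpen U) (ht : t ∈ U)
    (hr3 : MemLp r3 2 (volume.restrict (Ioo xL xR)))
    (hr4 : MemLp r4 2 (volume.restrict (Ioo xL xR)))
    (hIt : MemLp (fun p : ℝ × ℝ => It p.1 p.2) 2 (volume.restrict (Ioo xL xR ×ˢ Ioo (-1) 1)))
    (hσbd : ∀ x ∈ Ioo xL xR, σmin ≤ σ x ∧ σ x ≤ σmax)
    (hT : ∀ x ∈ Ioo xL xR, Tmin ≤ T x) (hTstar : ∀ x ∈ Ioo xL xR, Tmin ≤ Tstar x)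
    (hTtdef : ∀ x ∈ Ioo xL xR, Tt t x = T x - Tstar x)
    (hTt : ContDiffOn ℝ 1 (fun p : ℝ × ℝ => Tt p.1 p.2) (U ×ˢ Icc xL xR))
    (hρtdef : ∀ x ∈ Ioo xL xR, ρt x = avg (It x) - ε / √σ₀ * r4 x)
    (heq : ∀ x ∈ Ioo xL xR, ε ^ 2 * Cv * deriv (fun s => Tt s x) t - 2 * σ x * ρt x
      + σ x * a * c * (T x ^ 4 - Tstar x ^ 4) = r3 x) :
    ε ^ 2 * Cv / 2 * deriv (fun s => ∫ x in xL..xR, Tt s x ^ 2) t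
        + 4 * a * c * σmin * Tmin ^ 3 * (∫ x in xL..xR, Tt t x ^ 2)
      ≤ 3 * α₂ * (∫ x in xL..xR, Tt t x ^ 2)
        + 1 / (4 * α₂) * (∫ x in xL..xR, r3 x ^ 2)
        + σmax ^ 2 / (2 * α₂) * (∫ x in xL..xR, ∫ μ in (-1 : ℝ)..1, It x μ ^ 2)
        + ε ^ 2 * σmax ^ 2 / (α₂ * σ₀) * (∫ x in xL..xR, r4 x ^ 2) := by
  have hTt_mem : MemLp (Tt t) 2 (volume.restrict (Ioo xL xR)) :=
    memLp_restrict_of_continuousOn_prod ht isCompact_Icc hTt.continuousOn Ioo_subset_Icc_self 2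
  have hderiv_mem : MemLp (fun x => deriv (fun s => Tt s x) t) 2 (volume.restrict (Ioo xL xR)) :=
    memLp_restrict_of_continuousOn_prod (f := fun s x => deriv (fun r => Tt r x) s) ht isCompact_Icc
      (continuousOn_deriv_fst_of_contDiffOn_prod hTt hU (uniqueDiffOn_Icc hx))
      Ioo_subset_Icc_self 2
  have energy_deriv : ε ^ 2 * Cv / 2 * deriv (fun s => ∫ x in xL..xR, Tt s x ^ 2) t
      = ε ^ 2 * Cv * ∫ x in xL..xR, Tt t x * deriv (fun s => Tt s x) t := by
    rw [(hasDerivAt_integral_sq_of_contDiffOn_prod hx hU ht hTt).deriv]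
    ring
  rw [energy_deriv]
  exact integral_energy_density_le hx.le ha hc hσ₀ hσmin hTmin hα₂ hTt_mem hderiv_mem hr3 hr4 hIt
    hσbd hT hTstar hTtdef fun x hxI => hρtdef x hxI ▸ heq x hxI

/-- The differential energy inequality for the material temperature error `T̃` in the
convergence analysis: it follows by testing the temperature-error equation by `T̃`,
substituting `ρ̃ = ⟨Ĩ⟩ − (ε/√σ₀) r₄`, using the quartic lower bound, Cauchy–Schwarz,
and Young's inequality with parameter `α₂ > 0`. -/
theorem energy_inequality_for_temperature_error
    (a c Cv ε σ₀ : ℝ) (ha : 0 < a) (hc : 0 < c) (hCv : 0 < Cv)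
    (hε : 0 < ε) (hσ₀ : 0 < σ₀)
    (xL xR : ℝ) (hx : xL < xR) (tf : ℝ) (htf : 0 < tf)
    (σmin σmax Tmin Tmax : ℝ) (hσmin : 0 < σmin) (hTmin : 0 < Tmin)
    (σ T Tstar r3 r4 : ℝ → ℝ → ℝ) (Tt ρt : ℝ → ℝ → ℝ) (It : ℝ → ℝ → ℝ → ℝ)
    (hσ : ContinuousOn (fun p : ℝ × ℝ => σ p.1 p.2)
      (Set.Icc (0 : ℝ) tf ×ˢ Set.Icc xL xR))
    (hT : ContinuousOn (fun p : ℝ × ℝ => T p.1 p.2)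
      (Set.Icc (0 : ℝ) tf ×ˢ Set.Icc xL xR))
    (hTstar : ContinuousOn (fun p : ℝ × ℝ => Tstar p.1 p.2)
      (Set.Icc (0 : ℝ) tf ×ˢ Set.Icc xL xR))
    (hr3 : ContinuousOn (fun p : ℝ × ℝ => r3 p.1 p.2)
      (Set.Icc (0 : ℝ) tf ×ˢ Set.Icc xL xR))
    (hr4 : ContinuousOn (fun p : ℝ × ℝ => r4 p.1 p.2)
      (Set.Icc (0 : ℝ) tf ×ˢ Set.Icc xL xR))
    (hItc : ContinuousOn (fun p : ℝ × ℝ × ℝ => It p.1 p.2.1 p.2.2)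
      (Set.Icc (0 : ℝ) tf ×ˢ (Set.Icc xL xR ×ˢ Set.Icc (-1 : ℝ) 1)))
    (hσbd : ∀ t ∈ Set.Icc (0 : ℝ) tf, ∀ x ∈ Set.Icc xL xR,
      σmin ≤ σ t x ∧ σ t x ≤ σmax)
    (hTbd : ∀ t ∈ Set.Icc (0 : ℝ) tf, ∀ x ∈ Set.Icc xL xR,
      Tmin ≤ T t x ∧ T t x ≤ Tmax ∧ Tmin ≤ Tstar t x ∧ Tstar t x ≤ Tmax)
    (hTtdef : ∀ t x, Tt t x = T t x - Tstar t x)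
    (hTt : ContDiffOn ℝ 1 (fun p : ℝ × ℝ => Tt p.1 p.2)
      (Set.Icc (0 : ℝ) tf ×ˢ Set.Icc xL xR))
    (hρtdef : ∀ t x, ρt t x
      = avg (fun μ => It t x μ) - (ε / Real.sqrt σ₀) * r4 t x)
    (heq : ∀ t ∈ Set.Ioo (0 : ℝ) tf, ∀ x ∈ Set.Ioo xL xR,
      ε ^ 2 * Cv * deriv (fun s => Tt s x) t - 2 * σ t x * ρt t x
          + σ t x * a * c * ((T t x) ^ 4 - (Tstar t x) ^ 4) = r3 t x) :
    ∀ α₂ > (0 : ℝ), ∀ t ∈ Set.Ioo (0 : ℝ) tf,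
      (ε ^ 2 * Cv / 2) * deriv (fun s => ∫ x in xL..xR, (Tt s x) ^ 2) t
        + 4 * a * c * σmin * Tmin ^ 3 * (∫ x in xL..xR, (Tt t x) ^ 2)
      ≤ 3 * α₂ * (∫ x in xL..xR, (Tt t x) ^ 2)
        + (1 / (4 * α₂)) * (∫ x in xL..xR, (r3 t x) ^ 2)
        + (σmax ^ 2 / (2 * α₂)) * (∫ x in xL..xR, ∫ μ in (-1 : ℝ)..1, (It t x μ) ^ 2)
        + (ε ^ 2 * σmax ^ 2 / (α₂ * σ₀)) * (∫ x in xL..xR, (r4 t x) ^ 2) := by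
  intro α₂ hα₂ t ht
  have htI : t ∈ Icc 0 tf := Ioo_subset_Icc_self ht
  have hsub : Ioo xL xR ⊆ Icc xL xR := Ioo_subset_Icc_self
  exact energy_inequality_for_temperature_error_general ha.le hc.le hσ₀ hx hσmin.le hTmin.le hα₂
    isOpen_Ioo ht (memLp_restrict_of_continuousOn_prod htI isCompact_Icc hr3 hsub 2)
    (memLp_restrict_of_continuousOn_prod htI isCompact_Icc hr4 hsub 2)
    (memLp_restrict_of_continuousOn_prod (f := fun s (p : ℝ × ℝ) => It s p.1 p.2) htI
      (isCompact_Icc.prod isCompact_Icc) hItc (prod_mono hsub Ioo_subset_Icc_self) 2)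
    (fun x hxI => hσbd t htI x (hsub hxI)) (fun x hxI => (hTbd t htI x (hsub hxI)).1)
    (fun x hxI => (hTbd t htI x (hsub hxI)).2.2.1) (fun x _ => hTtdef t x)
    (hTt.mono (prod_mono_left Ioo_subset_Icc_self)) (fun x _ => hρtdef t x) (heq t ht)
end

section
/- Let c, ε, σ₀ > 0 be constants, x_L < x_R, t_f > 0, and let σ : [0,t_f] × [x_L,x_R] → ℝ be continuous with 0 ≤ σ(t,x) ≤ σ_max. Let ρ : [0,t_f] × [x_L,x_R] → ℝ and g : [0,t_f] × [x_L,x_R] × [−1,1] → ℝ be continuously differentiable and suppose g satisfies the microscopic equation (ε²/c)∂_t g + ε μ ∂_x g − ε⟨μ ∂_x g⟩ + √σ₀ μ ∂_x ρ + σ g = 0 pointwise on (0,t_f) × (x_L,x_R) × (−1,1). If ⟨g(0,x,·)⟩ = 0 for all x ∈ [x_L,x_R], then ⟨g(t,x,·)⟩ = 0 for all (t,x) ∈ [0,t_f] × [x_L,x_R]. -/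
open MeasureTheory

/-!
Averaging over `μ` removes the transport fluctuation `εμ∂ₓg - ε⟨μ∂ₓg⟩` and, by oddness, the term
proportional to `μ`. What remains at each interior `x` is the linear equation
`∂ₜ⟨g⟩ = -(σ/κ)⟨g⟩` with `κ = ε²/c`, and a lower bound on `σ/κ` keeps its solution at zero.
Continuity of `⟨g⟩` then covers the boundary points `x = xL` and `x = xR`.
-/

open Set Topology
open scoped Interval

section ParametricIntervalIntegral

variable {E : Type*} [NormedAddCommGroup E] [NormedSpace ℝ E] {a b : ℝ} {ν : Measure ℝ}
  [IsLocallyFiniteMeasure ν]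

theorem continuousOn_intervalIntegral_of_continuousOn_prod [NullSingletonClass ν]
    {X : Type*} [TopologicalSpace X] {s : Set X} {f : X → ℝ → E}
    (hf : ContinuousOn (fun p : X × ℝ => f p.1 p.2) (s ×ˢ [[a, b]])) :
    ContinuousOn (fun x => ∫ y in a..b, f x y ∂ν) s := by
  let clamp : ℝ → [[a, b]] := projIcc (a ⊓ b) (a ⊔ b) inf_le_sup
  have clamp_continuous : Continuous clamp := continuous_projIcc
  have clamped_continuous : Continuous fun p : s × ℝ => f p.1 (clamp p.2) :=
    hf.comp_continuous (f := fun p : s × ℝ => ((p.1 : X), (clamp p.2 : ℝ))) (by fun_prop)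
      fun p => ⟨p.1.2, (clamp p.2).2⟩
  rw [continuousOn_iff_continuous_domRestrict]
  convert intervalIntegral.continuous_parametric_intervalIntegral_of_continuous' (μ := ν)
    (f := fun (x : s) y => f x (clamp y)) clamped_continuous a b using 2 with x
  refine intervalIntegral.integral_congr fun y hy => ?_
  exact congrArg (fun z : [[a, b]] => f x z) (projIcc_of_mem inf_le_sup hy).symm

theorem hasDerivAt_intervalIntegral_of_continuousOn_prod {𝕜 : Type*} [RCLike 𝕜]
    [NormedSpace 𝕜 E] {U : Set 𝕜} {f f' : 𝕜 → ℝ → E} {t : 𝕜} (hU : U ∈ 𝓝 t)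
    (hf : ∀ s ∈ U, ContinuousOn (f s) [[a, b]])
    (hderiv : ∀ s ∈ U, ∀ y ∈ [[a, b]], HasDerivAt (fun s => f s y) (f' s y) s)
    (hf' : ContinuousOn (fun p : 𝕜 × ℝ => f' p.1 p.2) (U ×ˢ [[a, b]])) :
    HasDerivAt (fun s => ∫ y in a..b, f s y ∂ν) (∫ y in a..b, f' t y ∂ν) t := by
  obtain ⟨K, hKt, hKU, hK⟩ := local_compact_nhds hU
  obtain ⟨C, hC⟩ := (hK.prod isCompact_uIcc).exists_bound_of_continuousOn
    (hf'.mono (prod_mono_left hKU))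
  have htU : t ∈ U := mem_of_mem_nhds hU
  have hf't : ContinuousOn (f' t) [[a, b]] :=
    hf'.comp (f := fun y : ℝ => (t, y)) (by fun_prop) fun y hy => ⟨htU, hy⟩
  refine (intervalIntegral.hasDerivAt_integral_of_dominated_loc_of_deriv_le (F' := f')
    (bound := fun _ => C) hKt ?_ (hf t htU).intervalIntegrable
    hf't.intervalIntegrable.def'.aestronglyMeasurable ?_ intervalIntegrable_const ?_).2
  · filter_upwards [hU] with s hs
    exact (hf s hs).intervalIntegrable.def'.aestronglyMeasurable
  · exact .of_forall fun y hy s hs => hC (s, y) ⟨hs, uIoc_subset_uIcc hy⟩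
  · exact .of_forall fun y hy s hs => hderiv s (hKU hs) y (uIoc_subset_uIcc hy)

end ParametricIntervalIntegral

section PartialDeriv

variable {𝕜 E F : Type*} [NontriviallyNormedField 𝕜] [NormedAddCommGroup E] [NormedSpace 𝕜 E]
  [NormedAddCommGroup F] [NormedSpace 𝕜 F] {f : 𝕜 × E → F} {U : Set 𝕜} {s : Set E}

theorem hasDerivAt_prodMk_left_of_differentiableWithinAt {t : 𝕜} {y : E} (hU : U ∈ 𝓝 t)
    (hy : y ∈ s) (hf : DifferentiableWithinAt 𝕜 f (U ×ˢ s) (t, y)) :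
    HasDerivAt (fun τ => f (τ, y)) (fderivWithin 𝕜 f (U ×ˢ s) (t, y) (1, 0)) t := by
  have hline : HasDerivWithinAt (fun τ : 𝕜 => (τ, y)) (1, 0) U t :=
    (hasDerivWithinAt_id t U).prodMk (hasDerivWithinAt_const t U y)
  have hmaps : MapsTo (fun τ : 𝕜 => (τ, y)) U (U ×ˢ s) := fun _ hτ => ⟨hτ, hy⟩
  exact (hf.hasFDerivWithinAt.comp_hasDerivWithinAt t hline hmaps).hasDerivAt hU

theorem continuousOn_deriv_prodMk_left (hU : IsOpen U) (hs : UniqueDiffOn 𝕜 s)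
    (hf : ContDiffOn 𝕜 1 f (U ×ˢ s)) :
    ContinuousOn (fun p : 𝕜 × E => deriv (fun τ => f (τ, p.2)) p.1) (U ×ˢ s) := by
  have hfderiv : ContinuousOn (fun p => fderivWithin 𝕜 f (U ×ˢ s) p (1, 0)) (U ×ˢ s) :=
    (hf.continuousOn_fderivWithin (hU.uniqueDiffOn.prod hs) le_rfl).clm_apply continuousOn_const
  refine hfderiv.congr fun p hp => ?_
  exact (hasDerivAt_prodMk_left_of_differentiableWithinAt (hU.mem_nhds hp.1) hp.2
    (hf.differentiableOn one_ne_zero p hp)).deriv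

theorem continuousOn_deriv_prodMk_left_of_mem {t : 𝕜} (hU : IsOpen U) (ht : t ∈ U)
    (hs : UniqueDiffOn 𝕜 s) (hf : ContDiffOn 𝕜 1 f (U ×ˢ s)) :
    ContinuousOn (fun y => deriv (fun τ => f (τ, y)) t) s :=
  (continuousOn_deriv_prodMk_left hU hs hf).uncurry_left
    (f := fun t y => deriv (fun τ => f (τ, y)) t) t ht

end PartialDeriv

open scoped InnerProductSpace in
theorem eq_zero_of_inner_deriv_le_mul_norm_sq {E : Type*} [NormedAddCommGroup E]
    [InnerProductSpace ℝ E] {f f' : ℝ → E} {a b M : ℝ} (hf : ContinuousOn f (Icc a b))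
    (hf' : ∀ t ∈ Ioo a b, HasDerivAt f (f' t) t)
    (hM : ∀ t ∈ Ioo a b, ⟪f t, f' t⟫_ℝ ≤ M * ‖f t‖ ^ 2) (ha : f a = 0) :
    ∀ t ∈ Icc a b, f t = 0 := by
  -- Grönwall's inequality in weighted form: `exp (-2Mt) ‖f t‖²` is nonincreasing.
  have hderiv : ∀ t ∈ Ioo a b, HasDerivAt (fun t => Real.exp (-2 * M * t) * ‖f t‖ ^ 2)
      (2 * Real.exp (-2 * M * t) * (⟪f t, f' t⟫_ℝ - M * ‖f t‖ ^ 2)) t := by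
    intro t ht
    have hexp : HasDerivAt (fun t => Real.exp (-2 * M * t))
        (Real.exp (-2 * M * t) * (-2 * M * 1)) t := ((hasDerivAt_id t).const_mul _).exp
    exact (hexp.mul (hf' t ht).norm_sq).congr_deriv (by ring)
  have hanti : AntitoneOn (fun t => Real.exp (-2 * M * t) * ‖f t‖ ^ 2) (Icc a b) := by
    refine antitoneOn_of_deriv_nonpos (convex_Icc a b) (by fun_prop) ?_ ?_ <;> rw [interior_Icc]
    · exact fun t ht => (hderiv t ht).differentiableAt.differentiableWithinAt
    · intro t ht
      rw [(hderiv t ht).deriv]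
      exact mul_nonpos_of_nonneg_of_nonpos (by positivity) (sub_nonpos.2 (hM t ht))
  intro t ht
  have hle : Real.exp (-2 * M * t) * ‖f t‖ ^ 2 ≤ 0 := by
    simpa [ha] using hanti (left_mem_Icc.2 (ht.1.trans ht.2)) ht ht.1
  have hsq : ‖f t‖ ^ 2 ≤ 0 := nonpos_of_mul_nonpos_right hle (Real.exp_pos _)
  exact norm_eq_zero.1 (pow_eq_zero_iff two_ne_zero |>.1 (hsq.antisymm (sq_nonneg _)))

section AngularAverage

theorem avg_add {f h : ℝ → ℝ} (hf : IntervalIntegrable f volume (-1) 1)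
    (hh : IntervalIntegrable h volume (-1) 1) :
    avg (fun μ => f μ + h μ) = avg f + avg h := by
  simp only [avg, intervalIntegral.integral_add hf hh, mul_add]

theorem avg_const_mul (r : ℝ) (f : ℝ → ℝ) : avg (fun μ => r * f μ) = r * avg f := by
  simp only [avg, intervalIntegral.integral_const_mul, mul_left_comm]

theorem avg_const (r : ℝ) : avg (fun _ => r) = r := by
  rw [avg, intervalIntegral.integral_const, smul_eq_mul]
  ring

theorem avg_const_mul_id (r : ℝ) : avg (fun μ => r * μ) = 0 := by
  rw [avg, intervalIntegral.integral_const_mul, integral_id]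
  norm_num

theorem avg_congr {f h : ℝ → ℝ} (hfh : EqOn f h (Ioo (-1) 1)) : avg f = avg h := by
  rw [avg, avg, intervalIntegral.integral_congr_Ioo_of_le (by norm_num) hfh]

theorem continuousOn_avg {X : Type*} [TopologicalSpace X] {s : Set X} {f : X → ℝ → ℝ}
    (hf : ContinuousOn (fun p : X × ℝ => f p.1 p.2) (s ×ˢ Icc (-1) 1)) :
    ContinuousOn (fun x => avg (f x)) s := by
  rw [← uIcc_of_le (by norm_num : (-1 : ℝ) ≤ 1)] at hf
  exact continuousOn_const.mul (continuousOn_intervalIntegral_of_continuousOn_prod hf)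

theorem hasDerivAt_avg {f : ℝ → ℝ → ℝ} {U : Set ℝ} {t : ℝ} (hU : IsOpen U) (ht : t ∈ U)
    (hf : ContDiffOn ℝ 1 (fun p : ℝ × ℝ => f p.1 p.2) (U ×ˢ Icc (-1) 1)) :
    HasDerivAt (fun s => avg (f s)) (avg fun μ => deriv (fun s => f s μ) t) t := by
  have hderiv := continuousOn_deriv_prodMk_left hU (uniqueDiffOn_Icc (by norm_num)) hf
  rw [← uIcc_of_le (by norm_num : (-1 : ℝ) ≤ 1)] at hf hderiv
  refine (hasDerivAt_intervalIntegral_of_continuousOn_prod (f := f)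
    (f' := fun s μ => deriv (fun τ => f τ μ) s) (hU.mem_nhds ht) (fun s hs => ?_)
    (fun s hs μ hμ => ?_) hderiv).const_mul (1 / 2)
  · exact hf.continuousOn.comp (f := fun μ : ℝ => (s, μ)) (by fun_prop) fun _ hμ => ⟨hs, hμ⟩
  · exact (hasDerivAt_prodMk_left_of_differentiableWithinAt (hU.mem_nhds hs) hμ
      (hf.differentiableOn one_ne_zero (s, μ) ⟨hs, hμ⟩)).differentiableAt.hasDerivAt

end AngularAverage

section MicroscopicEquation

variable {κ ε : ℝ}

theorem avg_microscopic_equation {q r : ℝ} {u v w : ℝ → ℝ}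
    (hu : ContinuousOn u (Icc (-1) 1)) (hv : ContinuousOn v (Icc (-1) 1))
    (hw : ContinuousOn w (Icc (-1) 1))
    (heq : ∀ μ ∈ Ioo (-1 : ℝ) 1,
      κ * u μ + ε * μ * v μ - ε * avg (fun μ' => μ' * v μ') + q * μ + r * w μ = 0) :
    κ * avg u + r * avg w = 0 := by
  set m := avg (fun μ => μ * v μ)
  have hint {f : ℝ → ℝ} (hf : ContinuousOn f (Icc (-1) 1)) :
      IntervalIntegrable f volume (-1) 1 := hf.intervalIntegrable_of_Icc (by norm_num)
  calc κ * avg u + r * avg w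
      = κ * avg u + ε * m + -(ε * m) + 0 + r * avg w := by ring
    _ = avg (fun μ => κ * u μ + ε * (μ * v μ) + -(ε * m) + q * μ + r * w μ) := by
      rw [avg_add (hint (by fun_prop)) (hint (by fun_prop)),
        avg_add (hint (by fun_prop)) (hint (by fun_prop)),
        avg_add (hint (by fun_prop)) (hint (by fun_prop)),
        avg_add (hint (by fun_prop)) (hint (by fun_prop))]
      rw [avg_const_mul, avg_const_mul, avg_const, avg_const_mul_id, avg_const_mul]
    _ = avg (fun _ => 0) := avg_congr fun μ hμ => by linear_combination heq μ hμ
    _ = 0 := avg_const 0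

theorem hasDerivAt_avg_of_microscopic_equation {g : ℝ → ℝ → ℝ → ℝ} {T X : Set ℝ}
    {t x q r : ℝ} (hκ : κ ≠ 0) (hT : IsOpen T) (hX : IsOpen X) (ht : t ∈ T) (hx : x ∈ X)
    (hg : ContDiffOn ℝ 1 (fun p : ℝ × ℝ × ℝ => g p.1 p.2.1 p.2.2) (T ×ˢ (X ×ˢ Icc (-1) 1)))
    (heq : ∀ μ ∈ Ioo (-1 : ℝ) 1,
      κ * deriv (fun s => g s x μ) t + ε * μ * deriv (fun y => g t y μ) x
        - ε * avg (fun μ' => μ' * deriv (fun y => g t y μ') x) + q * μ + r * g t x μ = 0) :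
    HasDerivAt (fun s => avg (g s x)) (-(r / κ) * avg (g t x)) t := by
  have hg_time : ContDiffOn ℝ 1 (fun p : ℝ × ℝ => g p.1 x p.2) (T ×ˢ Icc (-1) 1) :=
    hg.comp (f := fun p : ℝ × ℝ => (p.1, x, p.2)) (by fun_prop) fun _ hp => ⟨hp.1, hx, hp.2⟩
  have hg_space : ContDiffOn ℝ 1 (fun p : ℝ × ℝ => g t p.1 p.2) (X ×ˢ Icc (-1) 1) :=
    hg.comp (f := fun p : ℝ × ℝ => (t, p.1, p.2)) (by fun_prop) fun _ hp => ⟨ht, hp⟩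
  have hg_angle : ContinuousOn (g t x) (Icc (-1) 1) :=
    hg_space.continuousOn.comp (f := fun μ : ℝ => (x, μ)) (by fun_prop) fun _ hμ => ⟨hx, hμ⟩
  have hIcc : UniqueDiffOn ℝ (Icc (-1 : ℝ) 1) := uniqueDiffOn_Icc (by norm_num)
  have hdt : ContinuousOn (fun μ => deriv (fun s => g s x μ) t) (Icc (-1) 1) :=
    continuousOn_deriv_prodMk_left_of_mem hT ht hIcc hg_time
  have hdx : ContinuousOn (fun μ => deriv (fun y => g t y μ) x) (Icc (-1) 1) :=
    continuousOn_deriv_prodMk_left_of_mem hX hx hIcc hg_space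
  have havg : κ * avg (fun μ => deriv (fun s => g s x μ) t) + r * avg (g t x) = 0 :=
    avg_microscopic_equation hdt hdx hg_angle heq
  refine (hasDerivAt_avg hT ht hg_time).congr_deriv ?_
  field_simp
  linear_combination havg

/-- `κ` stands for `ε²/c` and `q` for `√σ₀ ∂ₓρ`. -/
theorem zero_mean_propagation_general {xL xR tf : ℝ} {σ q : ℝ → ℝ → ℝ}
    {g : ℝ → ℝ → ℝ → ℝ} (hκ : κ ≠ 0) (hx : xL < xR)
    (hσ : ∀ x ∈ Ioo xL xR, BddBelow ((fun t => σ t x / κ) '' Ioo 0 tf))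
    (hg : ContDiffOn ℝ 1 (fun p : ℝ × ℝ × ℝ => g p.1 p.2.1 p.2.2)
      (Icc 0 tf ×ˢ (Icc xL xR ×ˢ Icc (-1) 1)))
    (heq : ∀ t ∈ Ioo 0 tf, ∀ x ∈ Ioo xL xR, ∀ μ ∈ Ioo (-1 : ℝ) 1,
      κ * deriv (fun s => g s x μ) t + ε * μ * deriv (fun y => g t y μ) x
        - ε * avg (fun μ' => μ' * deriv (fun y => g t y μ') x) + q t x * μ
        + σ t x * g t x μ = 0)
    (h0 : ∀ x ∈ Ioo xL xR, avg (g 0 x) = 0) :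
    ∀ t ∈ Icc 0 tf, ∀ x ∈ Icc xL xR, avg (g t x) = 0 := by
  have hcont : ContinuousOn (fun p : ℝ × ℝ => avg (g p.1 p.2)) (Icc 0 tf ×ˢ Icc xL xR) :=
    continuousOn_avg (f := fun p : ℝ × ℝ => g p.1 p.2) <|
      hg.continuousOn.comp (f := fun p : (ℝ × ℝ) × ℝ => (p.1.1, p.1.2, p.2)) (by fun_prop)
        fun _ hp => ⟨hp.1.1, hp.1.2, hp.2⟩
  have hinterior : ∀ t ∈ Icc 0 tf, ∀ x ∈ Ioo xL xR, avg (g t x) = 0 := by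
    intro t ht x hxI
    obtain ⟨m, hm⟩ := hσ x hxI
    have hcont_time : ContinuousOn (fun s => avg (g s x)) (Icc 0 tf) :=
      hcont.comp (f := fun s : ℝ => (s, x)) (by fun_prop)
        fun _ hs => ⟨hs, Ioo_subset_Icc_self hxI⟩
    refine eq_zero_of_inner_deriv_le_mul_norm_sq (M := -m) hcont_time
      (fun s hs => hasDerivAt_avg_of_microscopic_equation hκ isOpen_Ioo isOpen_Ioo hs hxI
        (hg.mono (by gcongr <;> exact Ioo_subset_Icc_self)) (heq s hs x hxI))
      (fun s hs => ?_) (h0 x hxI) t ht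
    have hms : m ≤ σ s x / κ := hm (mem_image_of_mem _ hs)
    rw [real_inner_comm, Real.norm_eq_abs, sq_abs, RCLike.inner_apply, conj_trivial]
    linarith [mul_le_mul_of_nonneg_right hms (sq_nonneg (avg (g s x)))]
  intro t ht
  have hcont_space : ContinuousOn (fun y => avg (g t y)) (Icc xL xR) :=
    hcont.comp (f := fun y : ℝ => (t, y)) (by fun_prop) fun _ hy => ⟨ht, hy⟩
  exact EqOn.of_subset_closure (hinterior t ht) hcont_space continuousOn_const
    Ioo_subset_Icc_self (closure_Ioo hx.ne).ge

end MicroscopicEquation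

/-- Propagation of the zero-mean property of the microscopic part `g` in the micro–macro
decomposition: averaging the microscopic equation over `μ` yields the linear homogeneous
ODE `(ε²/c) ∂ₜ⟨g⟩ + σ ⟨g⟩ = 0` at each `x`, so `⟨g⟩ = 0` propagates from the initial
time. -/
theorem zero_mean_propagation
    (c ε σ₀ : ℝ) (hc : 0 < c) (hε : 0 < ε) (hσ₀ : 0 < σ₀)
    (xL xR : ℝ) (hx : xL < xR) (tf : ℝ) (htf : 0 < tf)
    (σmax : ℝ)
    (σ : ℝ → ℝ → ℝ)
    (hσ : ContinuousOn (fun p : ℝ × ℝ => σ p.1 p.2)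
      (Set.Icc (0 : ℝ) tf ×ˢ Set.Icc xL xR))
    (hσbd : ∀ t ∈ Set.Icc (0 : ℝ) tf, ∀ x ∈ Set.Icc xL xR,
      0 ≤ σ t x ∧ σ t x ≤ σmax)
    (ρ : ℝ → ℝ → ℝ) (g : ℝ → ℝ → ℝ → ℝ)
    (hρ : ContDiffOn ℝ 1 (fun p : ℝ × ℝ => ρ p.1 p.2)
      (Set.Icc (0 : ℝ) tf ×ˢ Set.Icc xL xR))
    (hg : ContDiffOn ℝ 1 (fun p : ℝ × ℝ × ℝ => g p.1 p.2.1 p.2.2)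
      (Set.Icc (0 : ℝ) tf ×ˢ (Set.Icc xL xR ×ˢ Set.Icc (-1 : ℝ) 1)))
    (heq : ∀ t ∈ Set.Ioo (0 : ℝ) tf, ∀ x ∈ Set.Ioo xL xR, ∀ μ ∈ Set.Ioo (-1 : ℝ) 1,
      (ε ^ 2 / c) * deriv (fun s => g s x μ) t + ε * μ * deriv (fun y => g t y μ) x
          - ε * avg (fun μ' => μ' * deriv (fun y => g t y μ') x)
          + Real.sqrt σ₀ * μ * deriv (fun y => ρ t y) x + σ t x * g t x μ = 0)
    (h0 : ∀ x ∈ Set.Icc xL xR, avg (g 0 x) = 0) :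
    ∀ t ∈ Set.Icc (0 : ℝ) tf, ∀ x ∈ Set.Icc xL xR, avg (g t x) = 0 := by
  have hbdd : ∀ x ∈ Ioo xL xR, BddBelow ((fun t => σ t x / (ε ^ 2 / c)) '' Ioo 0 tf) :=
    fun x hxI => ⟨0, forall_mem_image.2 fun t ht =>
      div_nonneg (hσbd t (Ioo_subset_Icc_self ht) x (Ioo_subset_Icc_self hxI)).1 (by positivity)⟩
  exact zero_mean_propagation_general (q := fun t x => Real.sqrt σ₀ * deriv (fun y => ρ t y) x)
    (by positivity) hx hbdd hg
    (fun t ht x hxI μ hμ => by linear_combination heq t ht x hxI μ hμ)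
    fun x hxI => h0 x (Ioo_subset_Icc_self hxI)
end
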